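/- Let 𝔛 be a Scott set such that the partial order P_𝔛 of infinite members of 𝔛 ordered by inclusion carries a definable nonprincipal ultrafilter, and let T ∈ 𝔛 be a consistent completion of PA. Then there exists a recursively saturated model N of T whose standard system SSy(N) is exactly 𝔛. -/

import Mathlib

/-!
The model is an ultrapower, taken inside the Scott set `𝔛`, of a model of `T` with domain `ω` whose
satisfaction relation belongs to `𝔛`.

*Truth class.* Finite strings of quantifier witnesses, coded by natural numbers, serve as Henkin
terms: `dwit x φ s` names a counterexample to `φ` in the variable `x` under the valuation coded by
`s`, if there is one. That a set of propositional atoms describes a structure on these terms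
satisfying `T`, with its satisfaction relation, is expressed by clauses computable from
`theoryCode T` (`TC`, `tc_iff`). A model of `T` with choice functions satisfies all of them, so weak
König's lemma gives a solution `X ∈ 𝔛` (`IsScottSet.exists_satisfies`, `exists_tc`).

*Ultrapower.* A definable ultrafilter `U` on the infinite members of `𝔛` contains the cofinite sets
and decides every member of `𝔛` (`UF`). The elements of the model are the sequences of Henkin terms
in `𝔛`, modulo `U`. Since satisfaction is computable from `X`, the sets of indices at which a formula
holds lie in `𝔛`, and the witness terms depend computably on the index; hence Łoś's theorem holds
(`Ctx.los`) and the ultrapower is a model of `T`.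

*Saturation.* For a sequence of formulas coded in `𝔛`, the greedy conjunctions `greedy φ m`, in
which `φ m` is imposed only if it is consistent with what was imposed before, are satisfiable in every
structure. The sequence choosing at index `n` a witness of `greedy φ n` therefore realizes all of
them; if the type is finitely realized in the ultrapower, they amount there to the full
conjunctions (`Ctx.realize`). Recursive types are a special case.

*Standard system.* By Łoś's theorem, the set coded by the class of `f` is
`{n | {k | n ∈ f k according to X} ∈ U}`, which belongs to `𝔛` because `U` is definable
(`Ctx.coded_mem`). Conversely, for `A ∈ 𝔛` the type saying of `x` that it codes a set with standard
part `A` is coded in `𝔛`. It is finitely realized by numerals, since every finite set is coded by a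
natural number (`exists_natCode`) and membership between numerals is absolute for models of `PA`
(`PAModel.memRel_num`); hence it is realized.
-/

namespace Paper

/-! ### Syntax of (second-order) arithmetic.

Terms of the language `L_A = {0, 1, +, ·, <}`, with number variables indexed by `ℕ`.
Formulas also allow atomic formulas `t ∈ X_k` (membership in a set variable) and
set quantifiers `allS`; first-order formulas are those avoiding both. -/

inductive PTerm where
  | var : ℕ → PTerm
  | zero : PTerm
  | one : PTerm
  | add : PTerm → PTerm → PTerm
  | mul : PTerm → PTerm → PTerm

inductive Fml where
  | eq : PTerm → PTerm → Fml
  | lt : PTerm → PTerm → Fml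
  | mem : PTerm → ℕ → Fml
  | not : Fml → Fml
  | imp : Fml → Fml → Fml
  | all : ℕ → Fml → Fml
  | allS : ℕ → Fml → Fml

def Fml.and (φ ψ : Fml) : Fml := .not (.imp φ (.not ψ))
def Fml.or (φ ψ : Fml) : Fml := .imp (.not φ) ψ
def Fml.iff (φ ψ : Fml) : Fml := (Fml.imp φ ψ).and (Fml.imp ψ φ)
def Fml.ex (x : ℕ) (φ : Fml) : Fml := .not (.all x (.not φ))
def Fml.exS (k : ℕ) (φ : Fml) : Fml := .not (.allS k (.not φ))

/-- A structure for the language `{0, 1, +, ·, <}` on a carrier `M`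
(bundled, so that several structures can live on the same carrier). -/
structure AStr (M : Type) where
  zero : M
  one : M
  add : M → M → M
  mul : M → M → M
  lt : M → M → Prop

/-- The standard model of arithmetic. -/
def natStr : AStr ℕ := ⟨0, 1, (· + ·), (· * ·), (· < ·)⟩

namespace PTerm

def vars : PTerm → Finset ℕ
  | var n => {n}
  | zero => ∅
  | one => ∅
  | add t u => t.vars ∪ u.vars
  | mul t u => t.vars ∪ u.vars

/-- Substitution of a term `r` for the variable `x` (used only with `r` closed or
with `vars r ⊆ {x}`, in which case it is capture-free). -/
def subst (x : ℕ) (r : PTerm) : PTerm → PTerm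
  | var n => if n = x then r else var n
  | zero => zero
  | one => one
  | add t u => add (subst x r t) (subst x r u)
  | mul t u => mul (subst x r t) (subst x r u)

def val {M : Type} (S : AStr M) (v : ℕ → M) : PTerm → M
  | var n => v n
  | zero => S.zero
  | one => S.one
  | add t u => S.add (t.val S v) (u.val S v)
  | mul t u => S.mul (t.val S v) (u.val S v)

end PTerm

namespace Fml

/-- Free number variables. -/
def freeN : Fml → Finset ℕ
  | eq t u => t.vars ∪ u.vars
  | lt t u => t.vars ∪ u.vars
  | mem t _ => t.vars
  | not φ => φ.freeN
  | imp φ ψ => φ.freeN ∪ ψ.freeN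
  | all x φ => φ.freeN.erase x
  | allS _ φ => φ.freeN

/-- Substitution of a term `r` for the (free) variable `x`. -/
def substN (x : ℕ) (r : PTerm) : Fml → Fml
  | eq t u => eq (PTerm.subst x r t) (PTerm.subst x r u)
  | lt t u => lt (PTerm.subst x r t) (PTerm.subst x r u)
  | mem t k => mem (PTerm.subst x r t) k
  | not φ => not (substN x r φ)
  | imp φ ψ => imp (substN x r φ) (substN x r ψ)
  | all y φ => if y = x then all y φ else all y (substN x r φ)
  | allS k φ => allS k (substN x r φ)

/-- First-order formulas: no set variables, no set quantifiers. -/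
def IsFO : Fml → Prop
  | eq _ _ => True
  | lt _ _ => True
  | mem _ _ => False
  | not φ => φ.IsFO
  | imp φ ψ => φ.IsFO ∧ ψ.IsFO
  | all _ φ => φ.IsFO
  | allS _ _ => False

/-- Arithmetical formulas: set variables allowed as parameters, but no set quantifiers. -/
def IsArith : Fml → Prop
  | eq _ _ => True
  | lt _ _ => True
  | mem _ _ => True
  | not φ => φ.IsArith
  | imp φ ψ => φ.IsArith ∧ ψ.IsArith
  | all _ φ => φ.IsArith
  | allS _ _ => False

end Fml

/-! ### Satisfaction -/

/-- Satisfaction for a second-order structure `(M, 𝔛)`: number quantifiers range over `M`,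
set quantifiers range over `𝔛`. -/
def Sat {M : Type} (S : AStr M) (𝔛 : Set (Set M)) : (ℕ → M) → (ℕ → Set M) → Fml → Prop
  | v, _, .eq t u => t.val S v = u.val S v
  | v, _, .lt t u => S.lt (t.val S v) (u.val S v)
  | v, w, .mem t k => t.val S v ∈ w k
  | v, w, .not φ => ¬ Sat S 𝔛 v w φ
  | v, w, .imp φ ψ => Sat S 𝔛 v w φ → Sat S 𝔛 v w ψ
  | v, w, .all x φ => ∀ a : M, Sat S 𝔛 (Function.update v x a) w φ
  | v, w, .allS k φ => ∀ X ∈ 𝔛, Sat S 𝔛 v (Function.update w k X) φ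

/-- First-order satisfaction. -/
def SatFO {M : Type} (S : AStr M) (v : ℕ → M) (φ : Fml) : Prop :=
  Sat S Set.univ v (fun _ => ∅) φ

/-- `M ⊨ T` for a first-order theory `T`. -/
def ModelsT {M : Type} (S : AStr M) (T : Set Fml) : Prop :=
  ∀ φ ∈ T, ∀ v, SatFO S v φ

/-- Semantic consequence (equivalently, by the completeness theorem, provability). -/
def Proves (T : Set Fml) (φ : Fml) : Prop :=
  ∀ (M : Type) (S : AStr M), ModelsT S T → ∀ v, SatFO S v φ

/-- Consistency (equivalently, by the completeness theorem, having a model). -/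
def ConsistentT (T : Set Fml) : Prop :=
  ∃ (M : Type) (S : AStr M), ModelsT S T

def IsFOSentence (φ : Fml) : Prop := φ.IsFO ∧ φ.freeN = ∅

/-- Completeness of a theory. -/
def CompleteT (T : Set Fml) : Prop :=
  ∀ φ, IsFOSentence φ → (Proves T φ ∨ Proves T φ.not)

/-! ### Peano arithmetic -/

def numeral : ℕ → PTerm
  | 0 => .zero
  | n + 1 => .add (numeral n) .one

def univClosure (φ : Fml) : Fml := (φ.freeN.sort (· ≤ ·)).foldr Fml.all φ

/-- The induction axiom for `φ` in the variable `x` (before taking universal closure). -/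
def indFml (φ : Fml) (x : ℕ) : Fml :=
  .imp ((φ.substN x .zero).and (.all x (.imp φ (φ.substN x (.add (.var x) .one)))))
    (.all x φ)

/-- The axioms of first-order Peano arithmetic `PA`. -/
def PAax : Set Fml :=
  {Fml.all 0 (.not (.eq (.add (.var 0) .one) .zero)),
   Fml.all 0 (.all 1 (.imp (.eq (.add (.var 0) .one) (.add (.var 1) .one))
     (.eq (.var 0) (.var 1)))),
   Fml.all 0 (.eq (.add (.var 0) .zero) (.var 0)),
   Fml.all 0 (.all 1 (.eq (.add (.var 0) (.add (.var 1) .one))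
     (.add (.add (.var 0) (.var 1)) .one))),
   Fml.all 0 (.eq (.mul (.var 0) .zero) .zero),
   Fml.all 0 (.all 1 (.eq (.mul (.var 0) (.add (.var 1) .one))
     (.add (.mul (.var 0) (.var 1)) (.var 0)))),
   Fml.all 0 (.all 1 (Fml.iff (.lt (.var 0) (.var 1))
     (Fml.ex 2 (.eq (.add (.var 0) (.add (.var 2) .one)) (.var 1)))))} ∪
  {ψ | ∃ φ x, Fml.IsFO φ ∧ ψ = univClosure (indFml φ x)}

/-! ### Gödel coding -/

/-- The Cantor pairing function (the canonical pairing `⟨·,·⟩`). -/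
def cpair (a b : ℕ) : ℕ := (a + b) * (a + b + 1) / 2 + a

def PTerm.code : PTerm → ℕ
  | .var n => cpair 0 n
  | .zero => cpair 1 0
  | .one => cpair 2 0
  | .add t u => cpair 3 (cpair t.code u.code)
  | .mul t u => cpair 4 (cpair t.code u.code)

def Fml.code : Fml → ℕ
  | .eq t u => cpair 5 (cpair t.code u.code)
  | .lt t u => cpair 6 (cpair t.code u.code)
  | .not φ => cpair 7 φ.code
  | .imp φ ψ => cpair 8 (cpair φ.code ψ.code)
  | .all x φ => cpair 9 (cpair x φ.code)
  | .mem t k => cpair 10 (cpair t.code k)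
  | .allS k φ => cpair 11 (cpair k φ.code)

/-- A theory identified with its set of Gödel codes. -/
def theoryCode (T : Set Fml) : Set ℕ := Fml.code '' T

/-! ### The arithmetical hierarchy (syntactic classes) -/

inductive IsDelta0 : Fml → Prop
  | eq (t u) : IsDelta0 (.eq t u)
  | lt (t u) : IsDelta0 (.lt t u)
  | mem (t k) : IsDelta0 (.mem t k)
  | not {φ} : IsDelta0 φ → IsDelta0 φ.not
  | imp {φ ψ} : IsDelta0 φ → IsDelta0 ψ → IsDelta0 (φ.imp ψ)
  | ball {φ} (x t) : x ∉ PTerm.vars t → IsDelta0 φ →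
      IsDelta0 (.all x (.imp (.lt (.var x) t) φ))

def IsSigma01 (φ : Fml) : Prop := ∃ x ψ, IsDelta0 ψ ∧ φ = Fml.ex x ψ

def IsPi01 (φ : Fml) : Prop := ∃ x ψ, IsDelta0 ψ ∧ φ = Fml.all x ψ

/-! ### Subsystems of second-order arithmetic, semantically -/

/-- The basic axioms (`PA⁻`, a discretely ordered commutative semiring). -/
def PAminusSem {M : Type} (S : AStr M) : Prop :=
  (∀ a b c : M, S.add a (S.add b c) = S.add (S.add a b) c) ∧
  (∀ a b : M, S.add a b = S.add b a) ∧
  (∀ a b c : M, S.mul a (S.mul b c) = S.mul (S.mul a b) c) ∧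
  (∀ a b : M, S.mul a b = S.mul b a) ∧
  (∀ a b c : M, S.mul a (S.add b c) = S.add (S.mul a b) (S.mul a c)) ∧
  (∀ a : M, S.add a S.zero = a) ∧
  (∀ a : M, S.mul a S.zero = S.zero) ∧
  (∀ a : M, S.mul a S.one = a) ∧
  (∀ a b c : M, S.lt a b → S.lt b c → S.lt a c) ∧
  (∀ a : M, ¬ S.lt a a) ∧
  (∀ a b : M, S.lt a b ∨ a = b ∨ S.lt b a) ∧
  (∀ a b c : M, S.lt a b → S.lt (S.add a c) (S.add b c)) ∧
  (∀ a b c : M, S.lt S.zero c → S.lt a b → S.lt (S.mul a c) (S.mul b c)) ∧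
  (∀ a b : M, S.lt a b → ∃ c : M, S.add a c = b) ∧
  S.lt S.zero S.one ∧
  (∀ a : M, S.lt S.zero a → a = S.one ∨ S.lt S.one a) ∧
  (∀ a : M, a = S.zero ∨ S.lt S.zero a)

/-- `(M,𝔛)` satisfies the induction axiom for `φ` in the variable `x`
(with arbitrary number and set parameters). -/
def SatInd {M : Type} (S : AStr M) (𝔛 : Set (Set M)) (φ : Fml) (x : ℕ) : Prop :=
  ∀ (v : ℕ → M) (w : ℕ → Set M), (∀ k, w k ∈ 𝔛) →
    (Sat S 𝔛 (Function.update v x S.zero) w φ ∧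
      ∀ a, Sat S 𝔛 (Function.update v x a) w φ →
        Sat S 𝔛 (Function.update v x (S.add a S.one)) w φ) →
    ∀ a, Sat S 𝔛 (Function.update v x a) w φ

/-- `(M,𝔛) ⊨ RCA₀`: basic axioms, `Σ⁰₁` induction and `Δ⁰₁` comprehension. -/
def SatRCA0 {M : Type} (S : AStr M) (𝔛 : Set (Set M)) : Prop :=
  PAminusSem S ∧
  (∀ φ x, IsSigma01 φ → SatInd S 𝔛 φ x) ∧
  (∀ φ ψ x, IsSigma01 φ → IsPi01 ψ →
    ∀ (v : ℕ → M) (w : ℕ → Set M), (∀ k, w k ∈ 𝔛) →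
      (∀ a, Sat S 𝔛 (Function.update v x a) w φ ↔ Sat S 𝔛 (Function.update v x a) w ψ) →
      {a : M | Sat S 𝔛 (Function.update v x a) w φ} ∈ 𝔛)

/-- `(M,𝔛) ⊨ ACA₀`: basic axioms, the induction axiom and arithmetical comprehension. -/
def SatACA0 {M : Type} (S : AStr M) (𝔛 : Set (Set M)) : Prop :=
  PAminusSem S ∧
  (∀ X ∈ 𝔛, S.zero ∈ X → (∀ a, a ∈ X → S.add a S.one ∈ X) → ∀ a, a ∈ X) ∧
  (∀ φ x, Fml.IsArith φ → ∀ (v : ℕ → M) (w : ℕ → Set M), (∀ k, w k ∈ 𝔛) →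
    {a : M | Sat S 𝔛 (Function.update v x a) w φ} ∈ 𝔛)

/-! ### Arithmetization inside a model

All notions below unfold the standard (`Δ₀`/`Σ₁`) arithmetized definitions at the
meta-level, using the operations of a structure `S : AStr M`.  On models of `IΣ₁`
they agree with satisfaction of the corresponding arithmetic formulas. -/

namespace AStr

variable {M : Type} (S : AStr M)

/-- Interpretation of numerals. -/
def num : ℕ → M
  | 0 => S.zero
  | n + 1 => S.add (num n) S.one

def le (a b : M) : Prop := S.lt a b ∨ a = b

def two : M := S.add S.one S.one

/-- `p = ⟨a,b⟩` for the Cantor pairing function: `2p = (a+b)(a+b+1) + 2a`. -/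
def PairRel (p a b : M) : Prop :=
  S.mul S.two p = S.add (S.mul (S.add a b) (S.add (S.add a b) S.one)) (S.mul S.two a)

/-- `r = a mod m`. -/
def ModRel (a m r : M) : Prop := S.lt r m ∧ ∃ q, a = S.add (S.mul q m) r

/-- Gödel's β-function: `x = β(c, i)` where `c = ⟨a,b⟩` and `x = a mod (1 + (i+1)b)`. -/
def BetaRel (c i x : M) : Prop :=
  ∃ a b, S.PairRel c a b ∧ S.ModRel a (S.add S.one (S.mul (S.add i S.one) b)) x

/-- `s` codes a sequence of length `l` (as `s = ⟨c, l⟩`). -/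
def SeqLen (s l : M) : Prop := ∃ c, S.PairRel s c l

/-- The `i`-th entry of the sequence coded by `s` is `x`. -/
def SeqAt (s i x : M) : Prop := ∃ c l, S.PairRel s c l ∧ S.lt i l ∧ S.BetaRel c i x

/-- The fixed `Δ₀` coding formula `x ∈ y` for (bounded) sets:
`y = ⟨a,b⟩` and `a mod (1 + (x+1)b) = 1` with modulus `> 1`, and `x < y`. -/
def MemRel (x y : M) : Prop :=
  S.lt x y ∧ ∃ a b, S.PairRel y a b ∧
    S.lt S.one (S.add S.one (S.mul (S.add x S.one) b)) ∧
    S.ModRel a (S.add S.one (S.mul (S.add x S.one) b)) S.one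

/-- Tagged pairs, used for codes of syntax: `x = ⟨tag, payload⟩`. -/
def Node (x tag payload : M) : Prop := S.PairRel x tag payload

/-- `x` is the code of the variable `v`. -/
def VarC (v x : M) : Prop := S.Node x (S.num 0) v

def AddC (t u y : M) : Prop := ∃ p, S.PairRel p t u ∧ S.Node y (S.num 3) p
def MulC (t u y : M) : Prop := ∃ p, S.PairRel p t u ∧ S.Node y (S.num 4) p
def EqC (t u y : M) : Prop := ∃ p, S.PairRel p t u ∧ S.Node y (S.num 5) p
def LtC (t u y : M) : Prop := ∃ p, S.PairRel p t u ∧ S.Node y (S.num 6) p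
def NotC (x y : M) : Prop := S.Node y (S.num 7) x
def ImpC (x y z : M) : Prop := ∃ p, S.PairRel p x y ∧ S.Node z (S.num 8) p
def AllC (v x y : M) : Prop := ∃ p, S.PairRel p v x ∧ S.Node y (S.num 9) p

/-- `s` codes a construction sequence for terms. -/
def IsTermConSeq (s : M) : Prop :=
  ∀ i x, S.SeqAt s i x →
    (∃ v, S.VarC v x) ∨ S.Node x (S.num 1) (S.num 0) ∨ S.Node x (S.num 2) (S.num 0) ∨
    (∃ j k y z, S.lt j i ∧ S.lt k i ∧ S.SeqAt s j y ∧ S.SeqAt s k z ∧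
      (S.AddC y z x ∨ S.MulC y z x))

/-- `x` is a term code (in the sense of `M`, possibly nonstandard). -/
def TermCodeM (x : M) : Prop := ∃ s i, S.IsTermConSeq s ∧ S.SeqAt s i x

/-- `s` codes a construction sequence for (first-order) formulas. -/
def IsFmlConSeq (s : M) : Prop :=
  ∀ i x, S.SeqAt s i x →
    (∃ t u, S.TermCodeM t ∧ S.TermCodeM u ∧ (S.EqC t u x ∨ S.LtC t u x)) ∨
    (∃ j y, S.lt j i ∧ S.SeqAt s j y ∧ S.NotC y x) ∨
    (∃ j k y z, S.lt j i ∧ S.lt k i ∧ S.SeqAt s j y ∧ S.SeqAt s k z ∧ S.ImpC y z x) ∨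
    (∃ j v y, S.lt j i ∧ S.SeqAt s j y ∧ S.AllC v y x)

/-- `x` is a formula code (in the sense of `M`, possibly nonstandard). -/
def FmlCodeM (x : M) : Prop := ∃ s i, S.IsFmlConSeq s ∧ S.SeqAt s i x

/-- Construction sequences of pairs (term code, occurrence flag for the variable `v`). -/
def IsOccConSeq (v s : M) : Prop :=
  ∀ i p, S.SeqAt s i p → ∃ x f, S.PairRel p x f ∧
    ((S.VarC v x ∧ f = S.num 1) ∨
     (∃ u, S.VarC u x ∧ u ≠ v ∧ f = S.num 0) ∨
     ((S.Node x (S.num 1) (S.num 0) ∨ S.Node x (S.num 2) (S.num 0)) ∧ f = S.num 0) ∨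
     (∃ j k y z g h pj pk, S.lt j i ∧ S.lt k i ∧ S.SeqAt s j pj ∧ S.SeqAt s k pk ∧
       S.PairRel pj y g ∧ S.PairRel pk z h ∧ (S.AddC y z x ∨ S.MulC y z x) ∧
       ((f = S.num 1 ∧ (g = S.num 1 ∨ h = S.num 1)) ∨
        (f = S.num 0 ∧ g = S.num 0 ∧ h = S.num 0))))

/-- `f = 1` iff the variable `v` occurs in the term coded by `t` (`f ∈ {0,1}`). -/
def OccT (v t f : M) : Prop :=
  ∃ s i p, S.IsOccConSeq v s ∧ S.SeqAt s i p ∧ S.PairRel p t f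

/-- Construction sequences of pairs (formula code, freeness flag for the variable `v`). -/
def IsFreeConSeq (v s : M) : Prop :=
  ∀ i p, S.SeqAt s i p → ∃ x f, S.PairRel p x f ∧
    ((∃ t u, (S.EqC t u x ∨ S.LtC t u x) ∧
       ((f = S.num 1 ∧ (S.OccT v t (S.num 1) ∨ S.OccT v u (S.num 1))) ∨
        (f = S.num 0 ∧ S.OccT v t (S.num 0) ∧ S.OccT v u (S.num 0)))) ∨
     (∃ j y g pj, S.lt j i ∧ S.SeqAt s j pj ∧ S.PairRel pj y g ∧ S.NotC y x ∧ f = g) ∨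
     (∃ j k y z g h pj pk, S.lt j i ∧ S.lt k i ∧ S.SeqAt s j pj ∧ S.SeqAt s k pk ∧
       S.PairRel pj y g ∧ S.PairRel pk z h ∧ S.ImpC y z x ∧
       ((f = S.num 1 ∧ (g = S.num 1 ∨ h = S.num 1)) ∨
        (f = S.num 0 ∧ g = S.num 0 ∧ h = S.num 0))) ∨
     (∃ j w y g pj, S.lt j i ∧ S.SeqAt s j pj ∧ S.PairRel pj y g ∧ S.AllC w y x ∧
       ((w = v ∧ f = S.num 0) ∨ (w ≠ v ∧ f = g))))

/-- `f = 1` iff the variable `v` is free in the formula coded by `φ`. -/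
def FreeF (v φ f : M) : Prop :=
  ∃ s i p, S.IsFreeConSeq v s ∧ S.SeqAt s i p ∧ S.PairRel p φ f

/-- Construction sequences of pairs (term code, result of substituting `t` for `v`). -/
def IsSubTConSeq (v t s : M) : Prop :=
  ∀ i p, S.SeqAt s i p → ∃ x x', S.PairRel p x x' ∧
    ((S.VarC v x ∧ x' = t) ∨
     (∃ u, S.VarC u x ∧ u ≠ v ∧ x' = x) ∨
     ((S.Node x (S.num 1) (S.num 0) ∨ S.Node x (S.num 2) (S.num 0)) ∧ x' = x) ∨
     (∃ j k y z y' z' pj pk, S.lt j i ∧ S.lt k i ∧ S.SeqAt s j pj ∧ S.SeqAt s k pk ∧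
       S.PairRel pj y y' ∧ S.PairRel pk z z' ∧
       ((S.AddC y z x ∧ S.AddC y' z' x') ∨ (S.MulC y z x ∧ S.MulC y' z' x'))))

/-- Substitution of the term (code) `t` for the variable `v` in terms: `x' = x[t/v]`. -/
def SubT (v t x x' : M) : Prop :=
  ∃ s i p, S.IsSubTConSeq v t s ∧ S.SeqAt s i p ∧ S.PairRel p x x'

/-- Construction sequences for capture-free substitution in formulas. -/
def IsSubFConSeq (v t s : M) : Prop :=
  ∀ i p, S.SeqAt s i p → ∃ x x', S.PairRel p x x' ∧
    ((∃ a b a' b', S.SubT v t a a' ∧ S.SubT v t b b' ∧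
       ((S.EqC a b x ∧ S.EqC a' b' x') ∨ (S.LtC a b x ∧ S.LtC a' b' x'))) ∨
     (∃ j y y' pj, S.lt j i ∧ S.SeqAt s j pj ∧ S.PairRel pj y y' ∧
       S.NotC y x ∧ S.NotC y' x') ∨
     (∃ j k y z y' z' pj pk, S.lt j i ∧ S.lt k i ∧ S.SeqAt s j pj ∧ S.SeqAt s k pk ∧
       S.PairRel pj y y' ∧ S.PairRel pk z z' ∧ S.ImpC y z x ∧ S.ImpC y' z' x') ∨
     (∃ w y, S.AllC w y x ∧
       ((w = v ∧ x' = x) ∨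
        (w ≠ v ∧ (S.OccT w t (S.num 0) ∨ S.FreeF v y (S.num 0)) ∧
          ∃ j y' pj, S.lt j i ∧ S.SeqAt s j pj ∧ S.PairRel pj y y' ∧ S.AllC w y' x'))))

/-- Capture-free substitution in formulas: `x' = x[t/v]`, with `t` substitutable for `v`. -/
def SubF (v t x x' : M) : Prop :=
  ∃ s i p, S.IsSubFConSeq v t s ∧ S.SeqAt s i p ∧ S.PairRel p x x'

/-- `x` is (the code of) a generalization `∀v₁ ⋯ ∀vₖ y` of `y`. -/
def GenOf (y x : M) : Prop :=
  ∃ s i, S.SeqAt s (S.num 0) y ∧ S.SeqAt s i x ∧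
    ∀ j z z', S.SeqAt s j z → S.SeqAt s (S.add j S.one) z' → S.le (S.add j S.one) i →
      ∃ v, S.AllC v z z'

/-- Codes of instances of the logical axiom schemes (a Hilbert-style calculus with
modus ponens as the only rule; axioms are taken together with their generalizations). -/
def LogAxCore (x : M) : Prop :=
  -- A1 : a → (b → a)
  (∃ a b y, S.FmlCodeM a ∧ S.FmlCodeM b ∧ S.ImpC b a y ∧ S.ImpC a y x) ∨
  -- A2 : (a → (b → c)) → ((a → b) → (a → c))
  (∃ a b c bc abc ab ac r, S.FmlCodeM a ∧ S.FmlCodeM b ∧ S.FmlCodeM c ∧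
    S.ImpC b c bc ∧ S.ImpC a bc abc ∧ S.ImpC a b ab ∧ S.ImpC a c ac ∧
    S.ImpC ab ac r ∧ S.ImpC abc r x) ∨
  -- A3 : (¬b → ¬a) → (a → b)
  (∃ a b na nb l r, S.FmlCodeM a ∧ S.FmlCodeM b ∧ S.NotC a na ∧ S.NotC b nb ∧
    S.ImpC nb na l ∧ S.ImpC a b r ∧ S.ImpC l r x) ∨
  -- A4 : ∀v a → a[t/v]
  (∃ v t a a' al, S.TermCodeM t ∧ S.FmlCodeM a ∧ S.AllC v a al ∧ S.SubF v t a a' ∧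
    S.ImpC al a' x) ∨
  -- A5 : ∀v (a → b) → (∀v a → ∀v b)
  (∃ v a b ab alab ala alb r, S.FmlCodeM a ∧ S.FmlCodeM b ∧ S.ImpC a b ab ∧
    S.AllC v ab alab ∧ S.AllC v a ala ∧ S.AllC v b alb ∧ S.ImpC ala alb r ∧
    S.ImpC alab r x) ∨
  -- A6 : a → ∀v a, for v not free in a
  (∃ v a ala, S.FmlCodeM a ∧ S.FreeF v a (S.num 0) ∧ S.AllC v a ala ∧ S.ImpC a ala x) ∨
  -- E1 : t = t
  (∃ t, S.TermCodeM t ∧ S.EqC t t x) ∨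
  -- E2 : u = w → w = u (variables)
  (∃ u w vu vw e1 e2, S.VarC u vu ∧ S.VarC w vw ∧ S.EqC vu vw e1 ∧ S.EqC vw vu e2 ∧
    S.ImpC e1 e2 x) ∨
  -- E3 : u = w → (w = z → u = z) (variables)
  (∃ u w z vu vw vz e1 e2 e3 r, S.VarC u vu ∧ S.VarC w vw ∧ S.VarC z vz ∧
    S.EqC vu vw e1 ∧ S.EqC vw vz e2 ∧ S.EqC vu vz e3 ∧ S.ImpC e2 e3 r ∧ S.ImpC e1 r x) ∨
  -- E4 : congruence of +, ·, < with respect to = (variables)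
  (∃ u1 w1 u2 w2 a1 b1 a2 b2 e1 e2 s1 s2 es r,
    S.VarC u1 a1 ∧ S.VarC w1 b1 ∧ S.VarC u2 a2 ∧ S.VarC w2 b2 ∧
    S.EqC a1 b1 e1 ∧ S.EqC a2 b2 e2 ∧
    ((S.AddC a1 a2 s1 ∧ S.AddC b1 b2 s2 ∧ S.EqC s1 s2 es) ∨
     (S.MulC a1 a2 s1 ∧ S.MulC b1 b2 s2 ∧ S.EqC s1 s2 es) ∨
     (S.LtC a1 a2 s1 ∧ S.LtC b1 b2 s2 ∧ S.ImpC s1 s2 es)) ∧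
    S.ImpC e2 es r ∧ S.ImpC e1 r x) ∨
  -- E5 : congruence of = (variables)
  (∃ u1 w1 u2 w2 a1 b1 a2 b2 e1 e2 d1 d2 inner r,
    S.VarC u1 a1 ∧ S.VarC w1 b1 ∧ S.VarC u2 a2 ∧ S.VarC w2 b2 ∧
    S.EqC a1 b1 e1 ∧ S.EqC a2 b2 e2 ∧ S.EqC a1 a2 d1 ∧ S.EqC b1 b2 d2 ∧
    S.ImpC d1 d2 inner ∧ S.ImpC e2 inner r ∧ S.ImpC e1 r x)

/-- Logical axioms: generalizations of instances of the axiom schemes. -/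
def LogAx (x : M) : Prop := ∃ y, S.LogAxCore y ∧ S.GenOf y x

/-- `s` codes a proof of `φ` from the set `Γ ⊆ M` of (codes of) sentences:
every entry is a logical axiom, a member of `Γ`, or follows by modus ponens. -/
def ProofFrom (Γ : Set M) (s φ : M) : Prop :=
  (∃ i, S.SeqAt s i φ) ∧
  ∀ i x, S.SeqAt s i x →
    S.LogAx x ∨ x ∈ Γ ∨
    (∃ j k y z, S.lt j i ∧ S.lt k i ∧ S.SeqAt s j y ∧ S.SeqAt s k z ∧ S.ImpC y x z)

/-- Provability (in the sense of `M`) from the axiom set `Γ ⊆ M`. -/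
def ProvFrom (Γ : Set M) (φ : M) : Prop := ∃ s, S.ProofFrom Γ s φ

/-- `M ⊨ Con_Γ` : there is no (possibly nonstandard) proof of a contradiction from `Γ`. -/
def ConOf (Γ : Set M) : Prop :=
  ¬ ∃ φ nφ, S.NotC φ nφ ∧ S.ProvFrom Γ φ ∧ S.ProvFrom Γ nφ

/-- `M ⊨ Con_T` for a (standard) theory `T`: `M` thinks every finite subtheory
of `T` is consistent. -/
def SatConTheory (T : Set Fml) : Prop :=
  ∀ F : Finset Fml, ↑F ⊆ T → S.ConOf {x : M | ∃ φ ∈ F, x = S.num (Fml.code φ)}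

/-! ### Coded sets, standard systems, filters on `P_𝔛` -/

/-- `A` is unbounded in `M`. -/
def Unb (A : Set M) : Prop := ∀ b, ∃ a ∈ A, S.lt b a

/-- `P_𝔛`: the collection of unbounded sets in `𝔛` (a partial order under `⊆`). -/
def PX (𝔛 : Set (Set M)) : Set (Set M) := {A | A ∈ 𝔛 ∧ S.Unb A}

/-- The `a`-th slice `(A)_a = {b | ⟨a,b⟩ ∈ A}`. -/
def SliceAt (A : Set M) (a : M) : Set M := {b | ∃ p, S.PairRel p a b ∧ p ∈ A}

/-- A function `M → M` is coded in `𝔛` if its graph (via the canonical pairing)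
belongs to `𝔛`. -/
def CodedFun (𝔛 : Set (Set M)) (f : M → M) : Prop :=
  ∃ G ∈ 𝔛, ∀ a b, f a = b ↔ b ∈ S.SliceAt G a

/-- A family `F` of sets is definable (over `(M,𝔛)`) if `{a | (A)_a ∈ F} ∈ 𝔛`
for every `A ∈ 𝔛`. -/
def DefinableFam (𝔛 F : Set (Set M)) : Prop :=
  ∀ A ∈ 𝔛, {a : M | S.SliceAt A a ∈ F} ∈ 𝔛

/-- `F` is a complete family: every function coded in `𝔛` with bounded range is
constant on some member of `F`. -/
def CompleteOn (𝔛 F : Set (Set M)) : Prop :=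
  ∀ f : M → M, S.CodedFun 𝔛 f → (∃ b, ∀ a, S.lt (f a) b) →
    ∃ A ∈ F, ∀ x ∈ A, ∀ y ∈ A, f x = f y

/-- The standard system `SSy(M)`: standard parts of the `M`-coded sets. -/
def SSy : Set (Set ℕ) := {A | ∃ c : M, ∀ n : ℕ, (n ∈ A ↔ S.MemRel (S.num n) c)}

/-- `M` is nonstandard. -/
def Nonstd : Prop := ∃ a : M, ∀ n : ℕ, a ≠ S.num n

/-- `M` is recursively saturated: every recursive type (in the variable `0`, with
finitely many parameters assigned to the variables `1, …, k`) that is finitely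
realized in `M` is realized in `M`. -/
def RecSat : Prop :=
  ∀ (p : Set Fml) (k : ℕ) (par : ℕ → M),
    (∀ φ ∈ p, Fml.IsFO φ ∧ φ.freeN ⊆ Finset.range (k + 1)) →
    ComputablePred (fun n => ∃ φ ∈ p, Fml.code φ = n) →
    (∀ F : Finset Fml, ↑F ⊆ p →
      ∃ a : M, ∀ φ ∈ F, SatFO S (fun i => if i = 0 then a else par i) φ) →
    ∃ a : M, ∀ φ ∈ p, SatFO S (fun i => if i = 0 then a else par i) φ

/-- `c` is the least code of the (bounded) set `A`. -/
def IsLeastCode (A : Set M) (c : M) : Prop :=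
  (∀ x, S.MemRel x c ↔ x ∈ A) ∧ ∀ c', (∀ x, S.MemRel x c' ↔ x ∈ A) → S.le c c'

/-- `A* = {⟨A ∩ I_{<a}⟩ | a ∈ M}`, the set of least codes of initial segments of `A`. -/
def star (A : Set M) : Set M :=
  {c | ∃ a, S.IsLeastCode (A ∩ {b | S.lt b a}) c}

end AStr

/-! ### Filters and partial orders of sets -/

/-- A filter on a partial order `P` of sets, ordered by inclusion: a proper, nonempty,
upward closed, downward directed subset of `P`. -/
def IsFilterOn {α : Type} (P F : Set (Set α)) : Prop :=
  F ⊆ P ∧ F.Nonempty ∧ F ≠ P ∧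
  (∀ A ∈ F, ∀ B ∈ P, A ⊆ B → B ∈ F) ∧
  (∀ A ∈ F, ∀ B ∈ F, ∃ C ∈ F, C ⊆ A ∧ C ⊆ B)

/-- An ultrafilter on a partial order of sets: a maximal filter. -/
def IsUltraOn {α : Type} (P U : Set (Set α)) : Prop :=
  IsFilterOn P U ∧ ∀ F, IsFilterOn P F → U ⊆ F → F = U

/-- A principal filter on a partial order of sets. -/
def IsPrincipalOn {α : Type} (P U : Set (Set α)) : Prop :=
  ∃ A ∈ P, U = {B | B ∈ P ∧ A ⊆ B}

/-- The countable chain condition for a partial order `P` of sets (ordered by `⊆`):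
every uncountable subset contains two distinct compatible elements. -/
def CCCOn {α : Type} (P : Set (Set α)) : Prop :=
  ∀ A : Set (Set α), A ⊆ P → ¬A.Countable →
    ∃ X ∈ A, ∃ Y ∈ A, X ≠ Y ∧ ∃ Z ∈ P, Z ⊆ X ∧ Z ⊆ Y

/-- `𝔛` is a Boolean algebra of sets. -/
def IsBoolAlg {α : Type} (𝔛 : Set (Set α)) : Prop :=
  Set.univ ∈ 𝔛 ∧ ∅ ∈ 𝔛 ∧
  (∀ A ∈ 𝔛, ∀ B ∈ 𝔛, A ∪ B ∈ 𝔛) ∧ (∀ A ∈ 𝔛, ∀ B ∈ 𝔛, A ∩ B ∈ 𝔛) ∧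
  (∀ A ∈ 𝔛, Aᶜ ∈ 𝔛)

/-- A filter on the Boolean algebra `𝔛`. -/
def IsBAFilter {α : Type} (𝔛 F : Set (Set α)) : Prop :=
  F ⊆ 𝔛 ∧ F.Nonempty ∧ ∅ ∉ F ∧
  (∀ A ∈ F, ∀ B ∈ 𝔛, A ⊆ B → B ∈ F) ∧
  (∀ A ∈ F, ∀ B ∈ F, A ∩ B ∈ F)

/-- An ultrafilter on the Boolean algebra `𝔛`: a maximal filter. -/
def IsBAUltra {α : Type} (𝔛 F : Set (Set α)) : Prop :=
  IsBAFilter 𝔛 F ∧ ∀ G, IsBAFilter 𝔛 G → F ⊆ G → G = F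

/-! ### Scott sets -/

/-- Oracle partial recursive functions: partial recursive in the oracle `O`. -/
inductive RecursiveIn (O : ℕ →. ℕ) : (ℕ →. ℕ) → Prop
  | oracle : RecursiveIn O O
  | zero : RecursiveIn O (pure 0)
  | succ : RecursiveIn O Nat.succ
  | left : RecursiveIn O ↑fun n : ℕ => n.unpair.1
  | right : RecursiveIn O ↑fun n : ℕ => n.unpair.2
  | pair {f g} : RecursiveIn O f → RecursiveIn O g →
      RecursiveIn O fun n => Nat.pair <$> f n <*> g n
  | comp {f g} : RecursiveIn O f → RecursiveIn O g →
      RecursiveIn O fun n => g n >>= f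
  | prec {f g} : RecursiveIn O f → RecursiveIn O g →
      RecursiveIn O (Nat.unpaired fun a n =>
        n.rec (f a) fun y IH => do let i ← IH; g (Nat.pair a (Nat.pair y i)))
  | rfind {f} : RecursiveIn O f →
      RecursiveIn O fun a => Nat.rfind fun n => (fun m => m = 0) <$> f (Nat.pair a n)

/-- The characteristic function of a set of natural numbers. -/
noncomputable def chi (A : Set ℕ) : ℕ →. ℕ :=
  fun n => Part.some (@ite _ (n ∈ A) (Classical.propDecidable _) 1 0)

/-- Turing reducibility: `B ≤_T A`. -/
def TuringLe (B A : Set ℕ) : Prop := RecursiveIn (chi A) (chi B)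

/-- A set of naturals coding a binary tree (codes of finite binary strings,
closed under initial segments). -/
def IsTreeCode (T : Set ℕ) : Prop :=
  (∀ n ∈ T, ∃ l : List Bool, Encodable.encode l = n) ∧
  (∀ l₁ l₂ : List Bool, l₁ <+: l₂ → Encodable.encode l₂ ∈ T → Encodable.encode l₁ ∈ T)

/-- `B` (as the characteristic function of a branch) is an infinite branch of the
binary tree coded by `T`. -/
def IsBranchThrough (B T : Set ℕ) : Prop :=
  ∀ n : ℕ, ∃ l : List Bool, l.length = n ∧
    (∀ i : Fin l.length, (l.get i = true ↔ (i : ℕ) ∈ B)) ∧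
    Encodable.encode l ∈ T

/-- A Scott set: a nonempty Boolean algebra of subsets of `ω` closed under relative
recursion and containing an infinite branch of every infinite binary tree coded in it. -/
def IsScottSet (𝔛 : Set (Set ℕ)) : Prop :=
  𝔛.Nonempty ∧
  (∀ A ∈ 𝔛, ∀ B ∈ 𝔛, A ∪ B ∈ 𝔛) ∧
  (∀ A ∈ 𝔛, Aᶜ ∈ 𝔛) ∧
  (∀ A ∈ 𝔛, ∀ B : Set ℕ, TuringLe B A → B ∈ 𝔛) ∧
  (∀ T ∈ 𝔛, IsTreeCode T → T.Infinite → ∃ B ∈ 𝔛, IsBranchThrough B T)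

/-- The sets represented in the theory `T`. -/
def repSet (T : Set Fml) : Set (Set ℕ) :=
  {A | ∃ φ : Fml, Fml.IsFO φ ∧ φ.freeN ⊆ {0} ∧
    ∀ n : ℕ, (n ∈ A → Proves T (φ.substN 0 (numeral n))) ∧
      (n ∉ A → Proves T (Fml.not (φ.substN 0 (numeral n))))}

/-- Martin's axiom. -/
def MartinsAxiom : Prop :=
  ∀ (P : Type) (_ : PartialOrder P),
    (∀ A : Set P, ¬A.Countable → ∃ x ∈ A, ∃ y ∈ A, x ≠ y ∧ ∃ z, z ≤ x ∧ z ≤ y) →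
    ∀ 𝒟 : Set (Set P), (∀ D ∈ 𝒟, ∀ x : P, ∃ y ∈ D, y ≤ x) →
      Cardinal.mk 𝒟 < Cardinal.continuum →
      ∃ F : Set P, F.Nonempty ∧ (∀ x ∈ F, ∀ y, x ≤ y → y ∈ F) ∧
        (∀ x ∈ F, ∀ y ∈ F, ∃ z ∈ F, z ≤ x ∧ z ≤ y) ∧
        ∀ D ∈ 𝒟, (F ∩ D).Nonempty

/-! ### Functions computable from a member of a Scott set -/

theorem RecursiveIn.of_eq {O f g : ℕ →. ℕ} (hf : RecursiveIn O f) (H : ∀ n, f n = g n) :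
    RecursiveIn O g := (funext H : f = g) ▸ hf

theorem RecursiveIn.trans {O O' f : ℕ →. ℕ} (hO : RecursiveIn O' O) (hf : RecursiveIn O f) :
    RecursiveIn O' f := by
  induction hf with
  | oracle => exact hO
  | zero => exact .zero
  | succ => exact .succ
  | left => exact .left
  | right => exact .right
  | pair _ _ h1 h2 => exact .pair h1 h2
  | comp _ _ h1 h2 => exact .comp h1 h2
  | prec _ _ h1 h2 => exact .prec h1 h2
  | rfind _ h => exact .rfind h

theorem RecursiveIn.of_partrec {O f : ℕ →. ℕ} (hf : Nat.Partrec f) : RecursiveIn O f := by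
  induction hf with
  | zero => exact .zero
  | succ => exact .succ
  | left => exact .left
  | right => exact .right
  | pair _ _ h1 h2 => exact .pair h1 h2
  | comp _ _ h1 h2 => exact .comp h1 h2
  | prec _ _ h1 h2 => exact .prec h1 h2
  | rfind _ h => exact .rfind h

/-- `g` is recursive in some member of `𝔛`. -/
def RecX (𝔛 : Set (Set ℕ)) (g : ℕ → ℕ) : Prop :=
  ∃ A ∈ 𝔛, RecursiveIn (chi A) (fun n => Part.some (g n))

/-- `f` is computable from a member of `𝔛`, on the level of Gödel numbers. -/
def CompX (𝔛 : Set (Set ℕ)) {α β : Type} [Primcodable α] [Primcodable β] (f : α → β) : Prop :=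
  ∃ g : ℕ → ℕ, RecX 𝔛 g ∧ ∀ a, g (Encodable.encode a) = Encodable.encode (f a)

theorem recIn_comp {O : ℕ →. ℕ} {f g : ℕ → ℕ} (hf : RecursiveIn O (fun n => Part.some (f n)))
    (hg : RecursiveIn O (fun n => Part.some (g n))) :
    RecursiveIn O (fun n => Part.some (f (g n))) :=
  (RecursiveIn.comp hf hg).of_eq fun n => by simp

theorem recIn_pair {O : ℕ →. ℕ} {f g : ℕ → ℕ} (hf : RecursiveIn O (fun n => Part.some (f n)))
    (hg : RecursiveIn O (fun n => Part.some (g n))) :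
    RecursiveIn O (fun n => Part.some (Nat.pair (f n) (g n))) :=
  (RecursiveIn.pair hf hg).of_eq fun n => by simp [Seq.seq]

theorem recIn_of_primrec {O : ℕ →. ℕ} {f : ℕ → ℕ} (hf : Nat.Primrec f) :
    RecursiveIn O (fun n => Part.some (f n)) :=
  RecursiveIn.of_partrec (Nat.Partrec.of_primrec hf)

theorem recIn_rec {O : ℕ →. ℕ} {g : ℕ → ℕ} (m : ℕ)
    (hg : RecursiveIn O (fun n => Part.some (g n))) :
    RecursiveIn O (fun n => Part.some
      (Nat.rec m (fun y ih => g (Nat.pair y ih)) n : ℕ)) := by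
  have h := RecursiveIn.prec (O := O) (recIn_of_primrec (Nat.Primrec.const m))
    (recIn_comp hg (recIn_of_primrec Nat.Primrec.right))
  refine (RecursiveIn.comp h (recIn_of_primrec (Nat.Primrec.zero.pair Nat.Primrec.id))).of_eq ?_
  intro n
  simp only [Part.bind_eq_bind, Part.bind_some, Nat.unpaired, Nat.unpair_pair, id]
  induction n with
  | zero => rfl
  | succ n ih => simp [ih]

section
variable {𝔛 : Set (Set ℕ)} (hS : IsScottSet 𝔛)
include hS

theorem IsScottSet.le {A B : Set ℕ} (hA : A ∈ 𝔛) (h : TuringLe B A) : B ∈ 𝔛 := hS.2.2.2.1 A hA B h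

theorem IsScottSet.inter {A B : Set ℕ} (hA : A ∈ 𝔛) (hB : B ∈ 𝔛) : A ∩ B ∈ 𝔛 := by
  have := hS.2.2.1 _ (hS.2.1 _ (hS.2.2.1 A hA) _ (hS.2.2.1 B hB))
  rwa [Set.compl_union, compl_compl, compl_compl] at this

/-- Any two members of `𝔛` are recursive in a third one, their join. -/
theorem IsScottSet.join {A B : Set ℕ} (hA : A ∈ 𝔛) (hB : B ∈ 𝔛) :
    ∃ C ∈ 𝔛, TuringLe A C ∧ TuringLe B C := by
  classical
  -- the predicate `n ↦ (n even/odd and n / 2 ∈ A)` as a primitive recursive function of a bit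
  have key : ∀ (r : ℕ) (A : Set ℕ), TuringLe {n | n % 2 = r ∧ n / 2 ∈ A} A := by
    intro r A
    have h1 : RecursiveIn (chi A) (fun n => Part.some (if n / 2 ∈ A then 1 else 0)) := by
      have h2 : RecursiveIn (chi A) (fun n => Part.some (if n ∈ A then 1 else 0)) :=
        RecursiveIn.oracle.of_eq fun n => by simp only [chi]
      exact recIn_comp (f := fun n => if n ∈ A then 1 else 0) (g := fun n => n / 2) h2
        (recIn_of_primrec (Primrec.nat_iff.1 (Primrec.nat_div2.of_eq fun n => Nat.div2_val n)))
    have h3 : Primrec fun p : ℕ => if p.unpair.1 % 2 = r then p.unpair.2 else 0 := by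
      refine Primrec.ite ?_ (Primrec.snd.comp Primrec.unpair) (Primrec.const 0)
      exact Primrec.eq.comp (Primrec.nat_mod.comp (Primrec.fst.comp Primrec.unpair)
        (Primrec.const 2)) (Primrec.const r)
    refine (recIn_comp (recIn_of_primrec (Primrec.nat_iff.1 h3))
      (recIn_pair (recIn_of_primrec Nat.Primrec.id) h1)).of_eq fun n => ?_
    simp only [Nat.unpair_pair, chi, id, Set.mem_ofPred_eq]
    congr 1
    by_cases h1 : n % 2 = r <;> by_cases h2 : n / 2 ∈ A <;> simp [h1, h2]
  let C : Set ℕ := {n | n % 2 = 0 ∧ n / 2 ∈ A} ∪ {n | n % 2 = 1 ∧ n / 2 ∈ B}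
  have hC : ∀ D : Set ℕ, ∀ f : ℕ → ℕ, Nat.Primrec f → (∀ n, f n ∈ C ↔ n ∈ D) → TuringLe D C := by
    intro D f hf h
    have h2 : RecursiveIn (chi C) (fun n => Part.some (if n ∈ C then 1 else 0)) :=
      RecursiveIn.oracle.of_eq fun n => by simp only [chi]; congr
    refine (recIn_comp h2 (recIn_of_primrec hf)).of_eq fun n => ?_
    simp only [chi, h]
  have hd : Nat.Primrec fun n => 2 * n := Primrec.nat_iff.1 Primrec.nat_double
  refine ⟨C, hS.2.1 _ (hS.le hA (key 0 A)) _ (hS.le hB (key 1 B)),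
    hC A (fun n => 2 * n) hd ?_, hC B (fun n => 2 * n + 1) (Nat.Primrec.succ.comp hd) ?_⟩
  · intro n
    simp [C]
  · intro n
    have h1 : (2 * n + 1) % 2 = 1 := by omega
    have h2 : (2 * n + 1) / 2 = n := by omega
    simp [C, h1, h2]

theorem RecX.comp {f g : ℕ → ℕ} (hf : RecX 𝔛 f) (hg : RecX 𝔛 g) : RecX 𝔛 (fun n => f (g n)) := by
  obtain ⟨A, hA, hf⟩ := hf
  obtain ⟨B, hB, hg⟩ := hg
  obtain ⟨C, hC, hAC, hBC⟩ := hS.join hA hB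
  exact ⟨C, hC, recIn_comp (hAC.trans hf) (hBC.trans hg)⟩

theorem RecX.pair {f g : ℕ → ℕ} (hf : RecX 𝔛 f) (hg : RecX 𝔛 g) :
    RecX 𝔛 (fun n => Nat.pair (f n) (g n)) := by
  obtain ⟨A, hA, hf⟩ := hf
  obtain ⟨B, hB, hg⟩ := hg
  obtain ⟨C, hC, hAC, hBC⟩ := hS.join hA hB
  exact ⟨C, hC, recIn_pair (hAC.trans hf) (hBC.trans hg)⟩

theorem RecX.of_primrec {f : ℕ → ℕ} (hf : Nat.Primrec f) : RecX 𝔛 f := by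
  obtain ⟨A, hA⟩ := hS.1
  exact ⟨A, hA, recIn_of_primrec hf⟩

variable {α β γ : Type} [Primcodable α] [Primcodable β] [Primcodable γ]

theorem CompX.comp {f : β → γ} {g : α → β} (hf : CompX 𝔛 f) (hg : CompX 𝔛 g) :
    CompX 𝔛 (fun a => f (g a)) := by
  obtain ⟨f', hf', ef⟩ := hf
  obtain ⟨g', hg', eg⟩ := hg
  exact ⟨_, RecX.comp hS hf' hg', fun a => by simp [eg, ef]⟩

theorem CompX.pair {f : α → β} {g : α → γ} (hf : CompX 𝔛 f) (hg : CompX 𝔛 g) :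
    CompX 𝔛 (fun a => (f a, g a)) := by
  obtain ⟨f', hf', ef⟩ := hf
  obtain ⟨g', hg', eg⟩ := hg
  exact ⟨_, RecX.pair hS hf' hg', fun a => by simp [eg, ef]⟩

theorem CompX.of_primrec {f : α → β} (hf : Primrec f) : CompX 𝔛 f :=
  ⟨_, RecX.of_primrec hS (Nat.Primrec.pred.comp hf), fun a => by simp⟩

theorem CompX.comp₂ {δ : Type} [Primcodable δ] {f : β → γ → δ} {g : α → β} {h : α → γ}
    (hf : Primrec₂ f) (hg : CompX 𝔛 g)
    (hh : CompX 𝔛 h) : CompX 𝔛 (fun a => f (g a) (h a)) :=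
  (CompX.of_primrec hS hf).comp hS (hg.pair hS hh)

theorem CompX.const (b : β) : CompX 𝔛 (fun _ : α => b) := .of_primrec hS (Primrec.const b)

omit hS in
theorem CompX.nat_rec {h : ℕ × β → β} (b : β) (hh : CompX 𝔛 h) {f : ℕ → β} (f0 : f 0 = b)
    (fs : ∀ n, f (n + 1) = h (n, f n)) : CompX 𝔛 f := by
  obtain ⟨h', ⟨A, hA, hh'⟩, eh⟩ := hh
  refine ⟨_, ⟨A, hA, recIn_rec (Encodable.encode b) hh'⟩, fun n => ?_⟩
  simp only [Encodable.encode_nat]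
  induction n with
  | zero => simp [f0]
  | succ n ih =>
    have := eh (n, f n)
    simp only [Encodable.encode_prod_val, Encodable.encode_nat] at this
    simp only [ih, this, fs]

omit hS in
theorem CompX.of_mem {A : Set ℕ} [DecidablePred (· ∈ A)] (hA : A ∈ 𝔛) :
    CompX 𝔛 (fun n => decide (n ∈ A)) := by
  refine ⟨fun n => if n ∈ A then 1 else 0, ⟨A, hA, ?_⟩, fun n => ?_⟩
  · exact RecursiveIn.oracle.of_eq fun n => by simp only [chi]; congr
  · by_cases h : n ∈ A <;> simp [h]

theorem CompX.mem {A : Set ℕ} {f : ℕ → Bool} (hf : CompX 𝔛 f) (h : ∀ n, n ∈ A ↔ f n = true) :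
    A ∈ 𝔛 := by
  obtain ⟨g, ⟨B, hB, hg⟩, eg⟩ := hf
  refine hS.le hB (hg.of_eq fun n => ?_)
  have := eg n
  simp only [Encodable.encode_nat] at this
  rw [this]
  by_cases hn : n ∈ A
  · simp [chi, hn, (h n).1 hn]
  · have : f n = false := by simpa using fun hh => hn ((h n).2 hh)
    simp [chi, hn, this]

theorem CompX.preimage {A : Set ℕ} (hA : A ∈ 𝔛) {f : ℕ → ℕ} (hf : CompX 𝔛 f) :
    {n | f n ∈ A} ∈ 𝔛 := by
  classical
  exact CompX.mem hS ((CompX.of_mem hA).comp hS hf) (by simp)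

end

/-! ### Weak König's lemma for propositional clauses -/

/-- The set `X`, read as a truth assignment to the propositional atoms `0, 1, 2, …`, satisfies the
clause `c`, given as a list of literals (atom, sign). -/
def Satisfies (X : Set ℕ) (c : List (ℕ × Bool)) : Prop := ∃ l ∈ c, (l.1 ∈ X ↔ l.2 = true)

/-- Every clause in `tab` has a literal that the finite assignment `σ` does not falsify. -/
def NotRefuted (tab : List (List (ℕ × Bool))) (σ : List Bool) : Prop :=
  ∀ L ∈ tab, ∃ l ∈ L, ¬ σ[l.1]? = some (!l.2)

theorem primrec_notRefuted : PrimrecRel NotRefuted := by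
  have h : PrimrecRel fun (l : ℕ × Bool) (σ : List Bool) => ¬ σ[l.1]? = some (!l.2) := by
    refine PrimrecPred.not (Primrec.eq.comp ?_ ?_)
    · exact Primrec.list_getElem?.comp Primrec.snd (Primrec.fst.comp Primrec.fst)
    · exact Primrec.option_some.comp (Primrec.not.comp (Primrec.snd.comp Primrec.fst))
  exact h.exists_mem_list.forall_mem_list

/-- A system of clauses that is computable from `𝔛` and satisfiable has a satisfying assignment
in `𝔛`: the finite assignments that refute none of the clauses listed so far form an infinite
binary tree, and any branch is a satisfying assignment. -/
theorem IsScottSet.exists_satisfies {𝔛 : Set (Set ℕ)} (hS : IsScottSet 𝔛)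
    {cl : ℕ → List (ℕ × Bool)} (hcl : CompX 𝔛 cl) {X : Set ℕ} (hX : ∀ c, Satisfies X (cl c)) :
    ∃ B ∈ 𝔛, ∀ c, Satisfies B (cl c) := by
  classical
  let tab : ℕ → List (List (ℕ × Bool)) := fun n => (List.range n).map cl
  have htab : CompX 𝔛 tab := by
    refine CompX.nat_rec (h := fun p => p.2 ++ [cl p.1]) [] ?_ (by simp [tab])
      (fun n => by simp [tab, List.range_succ])
    exact CompX.comp₂ hS (f := fun l a => l ++ [a]) Primrec.list_concat (.of_primrec hS Primrec.snd)
      (hcl.comp hS (.of_primrec hS Primrec.fst))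
  let dec : ℕ → List Bool := fun n => (Encodable.decode n).getD []
  have hdec : Primrec dec := Primrec.option_getD.comp Primrec.decode (Primrec.const [])
  have dec_enc : ∀ σ, dec (Encodable.encode σ) = σ := fun σ => by simp [dec]
  let Tr : Set ℕ := {n | Encodable.encode (dec n) = n ∧ NotRefuted (tab (dec n).length) (dec n)}
  have hTr : Tr ∈ 𝔛 := by
    have h1 : Primrec fun p : ℕ × List (List (ℕ × Bool)) =>
        decide (Encodable.encode (dec p.1) = p.1 ∧ NotRefuted p.2 (dec p.1)) := by
      refine PrimrecPred.decide ?_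
      refine PrimrecPred.and (Primrec.eq.comp
        (Primrec.encode.comp (hdec.comp Primrec.fst)) Primrec.fst) ?_
      exact primrec_notRefuted.comp Primrec.snd (hdec.comp Primrec.fst)
    refine CompX.mem hS ((CompX.of_primrec hS h1).comp hS ((CompX.of_primrec hS Primrec.id).pair hS
      (htab.comp hS (.of_primrec hS (Primrec.list_length.comp hdec))))) fun n => ?_
    simp [Tr]
  have mem_Tr : ∀ σ, Encodable.encode σ ∈ Tr ↔ NotRefuted (tab σ.length) σ := fun σ => by
    simp [Tr, dec_enc]
  have hT1 : IsTreeCode Tr := by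
    refine ⟨fun n hn => ⟨_, hn.1⟩, fun l₁ l₂ hp h => ?_⟩
    rw [mem_Tr] at h ⊢
    intro L hL
    obtain ⟨l, hl, hne⟩ := h L (by
      simp only [tab, List.mem_map, List.mem_range] at hL ⊢
      obtain ⟨c, hc, rfl⟩ := hL
      exact ⟨c, hc.trans_le hp.length_le, rfl⟩)
    refine ⟨l, hl, fun h1 => hne ?_⟩
    obtain ⟨r, rfl⟩ := hp
    obtain ⟨hlt, -⟩ := List.getElem?_eq_some_iff.1 h1
    rw [List.getElem?_append_left hlt, h1]
  have hT2 : Tr.Infinite := by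
    refine Set.infinite_of_injective_forall_mem
      (f := fun n => Encodable.encode ((List.range n).map fun i => decide (i ∈ X))) ?_ ?_
    · intro a b hab
      simpa using congrArg List.length (Encodable.encode_injective hab)
    · intro n
      rw [mem_Tr]
      intro L hL
      simp only [tab, List.mem_map] at hL
      obtain ⟨c, -, rfl⟩ := hL
      obtain ⟨l, hl, h⟩ := hX c
      refine ⟨l, hl, fun h1 => ?_⟩
      obtain ⟨hlt, h2⟩ := List.getElem?_eq_some_iff.1 h1
      simp only [List.getElem_map, List.getElem_range] at h2
      by_cases hx : l.1 ∈ X <;> simp_all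
  obtain ⟨B, hB, hbr⟩ := hS.2.2.2.2 Tr hTr hT1 hT2
  refine ⟨B, hB, fun c => ?_⟩
  obtain ⟨m, hm⟩ : ∃ m, ∀ l ∈ cl c, l.1 < m := by
    obtain ⟨m, hm⟩ := ((cl c).map Prod.fst).toFinset.bddAbove
    refine ⟨m + 1, fun l hl => Nat.lt_succ_of_le (hm ?_)⟩
    simp only [List.coe_toFinset, List.mem_map]
    exact ⟨l, hl, rfl⟩
  obtain ⟨σ, hσ, hσB, hσT⟩ := hbr (max m (c + 1))
  obtain ⟨l, hl, hne⟩ := (mem_Tr σ).1 hσT (cl c) (by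
    simp only [tab, List.mem_map, List.mem_range]
    exact ⟨c, by omega, rfl⟩)
  have hlt : l.1 < σ.length := by have := hm l hl; omega
  refine ⟨l, hl, ?_⟩
  have := hσB ⟨l.1, hlt⟩
  rw [← this]
  rw [List.getElem?_eq_getElem hlt] at hne
  simp only [List.get_eq_getElem]
  revert hne
  cases σ[l.1] <;> cases l.2 <;> simp

/-- Finitely many computable systems of clauses can be merged into one. -/
theorem IsScottSet.exists_satisfies_list {𝔛 : Set (Set ℕ)} (hS : IsScottSet 𝔛)
    (F : List (ℕ → List (ℕ × Bool))) (hF : ∀ cl ∈ F, CompX 𝔛 cl) {X : Set ℕ}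
    (hX : ∀ cl ∈ F, ∀ c, Satisfies X (cl c)) :
    ∃ B ∈ 𝔛, ∀ cl ∈ F, ∀ c, Satisfies B (cl c) := by
  suffices h : ∃ G : ℕ → List (ℕ × Bool), CompX 𝔛 G ∧ ∀ Y : Set ℕ,
      (∀ c, Satisfies Y (G c)) ↔ (∀ cl ∈ F, ∀ c, Satisfies Y (cl c)) by
    obtain ⟨G, hG, h⟩ := h
    obtain ⟨B, hB, hs⟩ := hS.exists_satisfies hG ((h X).2 hX)
    exact ⟨B, hB, (h B).1 hs⟩
  clear hX
  induction F with
  | nil =>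
    refine ⟨fun _ => [(0, true), (0, false)], .const hS _, fun Y => ?_⟩
    simp only [Satisfies, List.not_mem_nil, false_imp_iff, implies_true, iff_true, List.mem_cons,
      or_false, exists_eq_or_imp, exists_eq_left]
    tauto
  | cons cl F ih =>
    obtain ⟨G, hG, h⟩ := ih fun cl' h => hF cl' (List.mem_cons_of_mem _ h)
    refine ⟨fun n => bif n.bodd then cl n.div2 else G n.div2, ?_, fun Y => ?_⟩
    · have h2 : CompX 𝔛 Nat.div2 := .of_primrec hS Primrec.nat_div2
      have h1 : Primrec fun p : Bool × List (ℕ × Bool) × List (ℕ × Bool) =>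
          bif p.1 then p.2.1 else p.2.2 :=
        Primrec.cond Primrec.fst (Primrec.fst.comp Primrec.snd) (Primrec.snd.comp Primrec.snd)
      exact (CompX.of_primrec hS h1).comp hS ((CompX.of_primrec hS Primrec.nat_bodd).pair hS
        (((hF cl (by simp)).comp hS h2).pair hS (hG.comp hS h2)))
    · rw [List.forall_mem_cons, ← h]
      refine ⟨fun hY => ⟨fun c => ?_, fun c => ?_⟩, fun hY c => ?_⟩
      · simpa using hY (2 * c + 1)
      · simpa using hY (2 * c)
      · cases hb : c.bodd
        · simpa [hb] using hY.2 c.div2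
        · simpa [hb] using hY.1 c.div2

/-! ### Decoding of formula codes -/

theorem cpair_two (a b : ℕ) : 2 * cpair a b = (a + b) * (a + b + 1) + 2 * a := by
  have h : 2 ∣ (a + b) * (a + b + 1) := (Nat.even_mul_succ_self _).two_dvd
  unfold cpair
  omega

theorem le_cpair_right (a b : ℕ) : b ≤ cpair a b := by
  have h := cpair_two a b
  rcases Nat.eq_zero_or_pos (a + b) with h0 | h0
  · omega
  · have : (a + b) * 2 ≤ (a + b) * (a + b + 1) := Nat.mul_le_mul_left _ (by omega)
    omega

theorem le_cpair_left (a b : ℕ) : a ≤ cpair a b := by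
  have h := cpair_two a b
  omega

theorem lt_cpair {a b : ℕ} (ha : 0 < a) : b < cpair a b := by
  have h := cpair_two a b
  have : (a + b) * 2 ≤ (a + b) * (a + b + 1) := Nat.mul_le_mul_left _ (by omega)
  omega

theorem cpair_inj {a b a' b' : ℕ} (h : cpair a b = cpair a' b') : a = a' ∧ b = b' := by
  have h1 := cpair_two a b
  have h2 := cpair_two a' b'
  rw [h] at h1
  have key : ∀ a b a' b' : ℕ, (a + b) * (a + b + 1) + 2 * a = (a' + b') * (a' + b' + 1) + 2 * a' →
      ¬ a + b < a' + b' := by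
    intro a b a' b' h hlt
    have : (a + b + 1) * (a + b + 2) ≤ (a' + b') * (a' + b' + 1) :=
      Nat.mul_le_mul (by omega) (by omega)
    nlinarith
  have e : a + b = a' + b' := by
    have := key a b a' b' (by omega)
    have := key a' b' a b (by omega)
    omega
  rw [e] at h1
  omega

/-- A left inverse of the Cantor pairing function. -/
noncomputable def cun : ℕ → ℕ × ℕ := Function.invFun fun p : ℕ × ℕ => cpair p.1 p.2

@[simp] theorem cun_cpair (a b : ℕ) : cun (cpair a b) = (a, b) :=
  Function.leftInverse_invFun (f := fun p : ℕ × ℕ => cpair p.1 p.2)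
    (fun p q h => Prod.ext (cpair_inj h).1 (cpair_inj h).2) (a, b)

/-- Total decoding of term codes; the guard only serves termination. -/
noncomputable def tdec (n : ℕ) : PTerm :=
  if (cun n).1 = 0 then .var (cun n).2
  else if (cun n).1 = 2 then .one
  else if h : (cun (cun n).2).1 < n ∧ (cun (cun n).2).2 < n then
    if (cun n).1 = 3 then .add (tdec (cun (cun n).2).1) (tdec (cun (cun n).2).2)
    else if (cun n).1 = 4 then .mul (tdec (cun (cun n).2).1) (tdec (cun (cun n).2).2)
    else .zero
  else .zero
termination_by n
decreasing_by all_goals omega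

/-- Total decoding of codes of first-order formulas; numbers that are not codes are sent to
formulas in such a way that decoding commutes with all connectives. -/
noncomputable def fdec (n : ℕ) : Fml :=
  if (cun n).1 = 5 then .eq (tdec (cun (cun n).2).1) (tdec (cun (cun n).2).2)
  else if (cun n).1 = 6 then .lt (tdec (cun (cun n).2).1) (tdec (cun (cun n).2).2)
  else if h : (cun n).2 < n then
    if (cun n).1 = 7 then .not (fdec (cun n).2)
    else if h' : (cun (cun n).2).1 < n ∧ (cun (cun n).2).2 < n then
      if (cun n).1 = 8 then .imp (fdec (cun (cun n).2).1) (fdec (cun (cun n).2).2)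
      else if (cun n).1 = 9 then .all (cun (cun n).2).1 (fdec (cun (cun n).2).2)
      else .eq .zero .zero
    else .eq .zero .zero
  else .eq .zero .zero
termination_by n
decreasing_by all_goals omega

theorem lt_cpair_cpair {t : ℕ} (ht : 0 < t) (a b : ℕ) :
    a < cpair t (cpair a b) ∧ b < cpair t (cpair a b) :=
  ⟨(le_cpair_left a b).trans_lt (lt_cpair ht), (le_cpair_right a b).trans_lt (lt_cpair ht)⟩

theorem tdec_var (n : ℕ) : tdec (cpair 0 n) = .var n := by rw [tdec]; simp
theorem tdec_zero : tdec (cpair 1 0) = .zero := by rw [tdec]; simp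
theorem tdec_one : tdec (cpair 2 0) = .one := by rw [tdec]; simp
theorem tdec_add (a b : ℕ) : tdec (cpair 3 (cpair a b)) = .add (tdec a) (tdec b) := by
  rw [tdec]; simp [lt_cpair_cpair]
theorem tdec_mul (a b : ℕ) : tdec (cpair 4 (cpair a b)) = .mul (tdec a) (tdec b) := by
  rw [tdec]; simp [lt_cpair_cpair]
theorem fdec_eq (a b : ℕ) : fdec (cpair 5 (cpair a b)) = .eq (tdec a) (tdec b) := by
  rw [fdec]; simp
theorem fdec_lt (a b : ℕ) : fdec (cpair 6 (cpair a b)) = .lt (tdec a) (tdec b) := by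
  rw [fdec]; simp
theorem fdec_not (a : ℕ) : fdec (cpair 7 a) = .not (fdec a) := by
  rw [fdec]; simp [lt_cpair]
theorem fdec_imp (a b : ℕ) : fdec (cpair 8 (cpair a b)) = .imp (fdec a) (fdec b) := by
  rw [fdec]; simp [lt_cpair, lt_cpair_cpair]
theorem fdec_all (a b : ℕ) : fdec (cpair 9 (cpair a b)) = .all a (fdec b) := by
  rw [fdec]; simp [lt_cpair, lt_cpair_cpair]

theorem tdec_code (t : PTerm) : tdec t.code = t := by
  induction t <;> simp_all [PTerm.code, tdec_var, tdec_zero, tdec_one, tdec_add, tdec_mul]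

theorem fdec_code (φ : Fml) (h : φ.IsFO) : fdec φ.code = φ := by
  induction φ <;>
    simp_all [Fml.code, Fml.IsFO, fdec_eq, fdec_lt, fdec_not, fdec_imp, fdec_all, tdec_code]

/-! ### Henkin terms and valuations as numbers -/

/-- The Henkin term `0`. -/
def dzero : ℕ := 0
/-- The Henkin term `1`. -/
def dunit : ℕ := Nat.pair 0 1
/-- The Henkin term `a + b`. -/
def dadd (a b : ℕ) : ℕ := Nat.pair (Nat.pair a b) 2
/-- The Henkin term `a · b`. -/
def dmul (a b : ℕ) : ℕ := Nat.pair (Nat.pair a b) 3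
/-- The Henkin constant witnessing the failure of `∀ x, φ` under the valuation `s`, if it fails;
`n` is the code of `φ`. -/
def dwit (x n s : ℕ) : ℕ := Nat.pair (Nat.pair x (Nat.pair n s)) 4

/-- The code of the valuation that sends `x` to `d` and agrees with `s` elsewhere. -/
def upd (s x d : ℕ) : ℕ := Nat.pair x (Nat.pair d s) + 1

/-- The valuation of the number variables coded by a number. -/
def lk : ℕ → ℕ → ℕ
  | 0, _ => 0
  | m + 1, i => if i = m.unpair.1 then m.unpair.2.unpair.1 else lk m.unpair.2.unpair.2 i
termination_by s => s
decreasing_by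
  exact Nat.lt_succ_of_le ((Nat.unpair_right_le _).trans (Nat.unpair_right_le _))

theorem lk_zero (i : ℕ) : lk 0 i = 0 := by rw [lk]

theorem lk_upd (s x d : ℕ) : lk (upd s x d) = Function.update (lk s) x d := by
  funext i
  rw [upd, lk]
  simp [Function.update_apply]

theorem lk_le (s i : ℕ) : lk s i ≤ s := by
  induction s using Nat.strong_induction_on with
  | _ s ih =>
    cases s with
    | zero => rw [lk_zero]
    | succ m =>
      have h := Nat.unpair_right_le m
      have h1 := Nat.unpair_left_le m.unpair.2
      have h2 := Nat.unpair_right_le m.unpair.2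
      rw [lk]
      split_ifs
      · omega
      · exact (ih _ (by omega)).trans (by omega)

theorem lt_pair_succ (p t : ℕ) : p < Nat.pair p (t + 1) := by
  have h : 1 ≤ Nat.pair p (t + 1) := (Nat.right_le_pair p (t + 1)).trans' (by omega)
  simpa using Nat.unpair_lt h

section
variable {K : Type} (S : AStr K)

open Classical in
/-- A counterexample to `∀ x, φ` under the valuation `v`, if there is one. -/
noncomputable def witChoice (v : ℕ → K) (x : ℕ) (φ : Fml) : K :=
  if h : ∃ b, ¬ SatFO S (Function.update v x b) φ then h.choose else S.zero

/-- The interpretation in a structure `S` of the Henkin terms. -/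
noncomputable def interp (n : ℕ) : K :=
  if n.unpair.2 = 1 then S.one
  else if n.unpair.2 = 2 then
    if h : n.unpair.1.unpair.1 < n ∧ n.unpair.1.unpair.2 < n then
      S.add (interp n.unpair.1.unpair.1) (interp n.unpair.1.unpair.2) else S.zero
  else if n.unpair.2 = 3 then
    if h : n.unpair.1.unpair.1 < n ∧ n.unpair.1.unpair.2 < n then
      S.mul (interp n.unpair.1.unpair.1) (interp n.unpair.1.unpair.2) else S.zero
  else if n.unpair.2 = 4 then
    witChoice S (fun i => if h : lk n.unpair.1.unpair.2.unpair.2 i < n then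
      interp (lk n.unpair.1.unpair.2.unpair.2 i) else S.zero)
      n.unpair.1.unpair.1 (fdec n.unpair.1.unpair.2.unpair.1)
  else S.zero
termination_by n
decreasing_by all_goals omega

theorem interp_zero : interp S dzero = S.zero := by rw [interp]; simp [dzero]
theorem interp_one : interp S dunit = S.one := by rw [interp]; simp [dunit]
theorem interp_add (a b : ℕ) : interp S (dadd a b) = S.add (interp S a) (interp S b) := by
  rw [interp]
  simp [dadd, (Nat.left_le_pair a b).trans_lt (lt_pair_succ _ 1),
    (Nat.right_le_pair a b).trans_lt (lt_pair_succ _ 1)]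
theorem interp_mul (a b : ℕ) : interp S (dmul a b) = S.mul (interp S a) (interp S b) := by
  rw [interp]
  simp [dmul, (Nat.left_le_pair a b).trans_lt (lt_pair_succ _ 2),
    (Nat.right_le_pair a b).trans_lt (lt_pair_succ _ 2)]

/-- The witness term does name a counterexample, since its interpretation is chosen as one. -/
theorem interp_wit (x n s : ℕ)
    (h : SatFO S (Function.update (fun i => interp S (lk s i)) x (interp S (dwit x n s))) (fdec n))
    (b : K) : SatFO S (Function.update (fun i => interp S (lk s i)) x b) (fdec n) := by
  have hlt : ∀ i, lk s i < Nat.pair (Nat.pair x (Nat.pair n s)) 4 := fun i =>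
    (lk_le s i).trans_lt (((Nat.right_le_pair n s).trans (Nat.right_le_pair x _)).trans_lt
      (lt_pair_succ _ 3))
  have e : interp S (dwit x n s) = witChoice S (fun i => interp S (lk s i)) x (fdec n) := by
    rw [interp]
    simp [dwit, hlt]
  by_contra hb
  have hex : ∃ b, ¬ SatFO S (Function.update (fun i => interp S (lk s i)) x b) (fdec n) := ⟨b, hb⟩
  refine hex.choose_spec ?_
  rw [e, witChoice, dif_pos hex] at h
  exact h

end

/-! ### Truth classes over the Henkin terms -/

/-- The propositional atom saying that the formula coded by `n` is true under the valuation `s`. -/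
def aSat (n s : ℕ) : ℕ := Nat.pair 0 (Nat.pair n s)
/-- The propositional atom saying that the term coded by `t` has the value `d` under the valuation `s`. -/
def aVal (t s d : ℕ) : ℕ := Nat.pair 1 (Nat.pair t (Nat.pair s d))
/-- The propositional atom saying that the Henkin terms `a` and `b` are equal. -/
def aEq (a b : ℕ) : ℕ := Nat.pair 2 (Nat.pair a b)
/-- The propositional atom saying that the Henkin term `a` is below the Henkin term `b`. -/
def aLt (a b : ℕ) : ℕ := Nat.pair 3 (Nat.pair a b)

/-- A family of clauses indexed by five numbers, as a family indexed by one number. -/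
def pk (f : ℕ → ℕ → ℕ → ℕ → ℕ → List (ℕ × Bool)) (c : ℕ) : List (ℕ × Bool) :=
  f c.unpair.1 c.unpair.2.unpair.1 c.unpair.2.unpair.2.unpair.1
    c.unpair.2.unpair.2.unpair.2.unpair.1 c.unpair.2.unpair.2.unpair.2.unpair.2

theorem forall_pk {X : Set ℕ} {f : ℕ → ℕ → ℕ → ℕ → ℕ → List (ℕ × Bool)} :
    (∀ c, Satisfies X (pk f c)) ↔ ∀ a b c d e, Satisfies X (f a b c d e) := by
  refine ⟨fun h a b c d e => ?_, fun h c => h _ _ _ _ _⟩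
  have := h (Nat.pair a (Nat.pair b (Nat.pair c (Nat.pair d e))))
  simpa [pk] using this

/-- The clauses expressing that a set of atoms is a truth class with Henkin witnesses. -/
def tcClauses : List (ℕ → List (ℕ × Bool)) := [
  pk fun x s d _ _ => [(aVal (cpair 0 x) (upd s x d) d, true)],
  pk fun x s d e k => [(aVal (cpair 0 x) s e, false),
    (aVal (cpair 0 x) (upd s (x + k + 1) d) e, true)],
  pk fun x s d e k => [(aVal (cpair 0 (x + k + 1)) s e, false),
    (aVal (cpair 0 (x + k + 1)) (upd s x d) e, true)],
  pk fun x _ _ _ _ => [(aVal (cpair 0 x) 0 0, true)],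
  pk fun s _ _ _ _ => [(aVal (cpair 1 0) s dzero, true)],
  pk fun s _ _ _ _ => [(aVal (cpair 2 0) s dunit, true)],
  pk fun t u s a b => [(aVal t s a, false), (aVal u s b, false),
    (aVal (cpair 3 (cpair t u)) s (dadd a b), true)],
  pk fun t u s a b => [(aVal t s a, false), (aVal u s b, false),
    (aVal (cpair 4 (cpair t u)) s (dmul a b), true)],
  pk fun t u s a b => [(aVal t s a, false), (aVal u s b, false),
    (aSat (cpair 5 (cpair t u)) s, false), (aEq a b, true)],
  pk fun t u s a b => [(aVal t s a, false), (aVal u s b, false),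
    (aEq a b, false), (aSat (cpair 5 (cpair t u)) s, true)],
  pk fun t u s a b => [(aVal t s a, false), (aVal u s b, false),
    (aSat (cpair 6 (cpair t u)) s, false), (aLt a b, true)],
  pk fun t u s a b => [(aVal t s a, false), (aVal u s b, false),
    (aLt a b, false), (aSat (cpair 6 (cpair t u)) s, true)],
  pk fun n s _ _ _ => [(aSat (cpair 7 n) s, false), (aSat n s, false)],
  pk fun n s _ _ _ => [(aSat (cpair 7 n) s, true), (aSat n s, true)],
  pk fun n m s _ _ => [(aSat (cpair 8 (cpair n m)) s, false), (aSat n s, false),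
    (aSat m s, true)],
  pk fun n m s _ _ => [(aSat n s, true), (aSat (cpair 8 (cpair n m)) s, true)],
  pk fun n m s _ _ => [(aSat m s, false), (aSat (cpair 8 (cpair n m)) s, true)],
  pk fun x n s d _ => [(aSat (cpair 9 (cpair x n)) s, false), (aSat n (upd s x d), true)],
  pk fun x n s _ _ => [(aSat n (upd s x (dwit x n s)), false),
    (aSat (cpair 9 (cpair x n)) s, true)],
  pk fun a _ _ _ _ => [(aEq a a, true)],
  pk fun a b _ _ _ => [(aEq a b, false), (aEq b a, true)],
  pk fun a b c _ _ => [(aEq a b, false), (aEq b c, false), (aEq a c, true)],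
  pk fun a b c d _ => [(aEq a b, false), (aEq c d, false), (aEq (dadd a c) (dadd b d), true)],
  pk fun a b c d _ => [(aEq a b, false), (aEq c d, false), (aEq (dmul a c) (dmul b d), true)],
  pk fun a b c d _ => [(aEq a b, false), (aEq c d, false), (aLt a c, false), (aLt b d, true)]]

open Classical in
/-- The clauses expressing that every formula with code in `A` is true. -/
noncomputable def thyClauses (A : Set ℕ) (c : ℕ) : List (ℕ × Bool) :=
  cond (decide (c.unpair.1 ∈ A)) [(aSat c.unpair.1 c.unpair.2, true)] [(0, true), (0, false)]

/-- A set of atoms is a truth class with Henkin witnesses in which all formulas with code in `A`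
are true. -/
structure TC (A X : Set ℕ) : Prop where
  var_self : ∀ x s d, aVal (cpair 0 x) (upd s x d) d ∈ X
  var_lt : ∀ x s d e k, aVal (cpair 0 x) s e ∈ X → aVal (cpair 0 x) (upd s (x + k + 1) d) e ∈ X
  var_gt : ∀ x s d e k, aVal (cpair 0 (x + k + 1)) s e ∈ X →
    aVal (cpair 0 (x + k + 1)) (upd s x d) e ∈ X
  var_zero : ∀ x, aVal (cpair 0 x) 0 0 ∈ X
  zero : ∀ s, aVal (cpair 1 0) s dzero ∈ X
  one : ∀ s, aVal (cpair 2 0) s dunit ∈ X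
  add : ∀ t u s a b, aVal t s a ∈ X → aVal u s b ∈ X →
    aVal (cpair 3 (cpair t u)) s (dadd a b) ∈ X
  mul : ∀ t u s a b, aVal t s a ∈ X → aVal u s b ∈ X →
    aVal (cpair 4 (cpair t u)) s (dmul a b) ∈ X
  eq1 : ∀ t u s a b, aVal t s a ∈ X → aVal u s b ∈ X →
    aSat (cpair 5 (cpair t u)) s ∈ X → aEq a b ∈ X
  eq2 : ∀ t u s a b, aVal t s a ∈ X → aVal u s b ∈ X →
    aEq a b ∈ X → aSat (cpair 5 (cpair t u)) s ∈ X
  lt1 : ∀ t u s a b, aVal t s a ∈ X → aVal u s b ∈ X →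
    aSat (cpair 6 (cpair t u)) s ∈ X → aLt a b ∈ X
  lt2 : ∀ t u s a b, aVal t s a ∈ X → aVal u s b ∈ X →
    aLt a b ∈ X → aSat (cpair 6 (cpair t u)) s ∈ X
  not1 : ∀ n s, aSat (cpair 7 n) s ∈ X → aSat n s ∉ X
  not2 : ∀ n s, aSat (cpair 7 n) s ∈ X ∨ aSat n s ∈ X
  imp1 : ∀ n m s, aSat (cpair 8 (cpair n m)) s ∈ X → aSat n s ∈ X → aSat m s ∈ X
  imp2 : ∀ n m s, aSat n s ∈ X ∨ aSat (cpair 8 (cpair n m)) s ∈ X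
  imp3 : ∀ n m s, aSat m s ∈ X → aSat (cpair 8 (cpair n m)) s ∈ X
  all1 : ∀ x n s d, aSat (cpair 9 (cpair x n)) s ∈ X → aSat n (upd s x d) ∈ X
  all2 : ∀ x n s, aSat n (upd s x (dwit x n s)) ∈ X → aSat (cpair 9 (cpair x n)) s ∈ X
  eq_refl : ∀ a, aEq a a ∈ X
  eq_symm : ∀ a b, aEq a b ∈ X → aEq b a ∈ X
  eq_trans : ∀ a b c, aEq a b ∈ X → aEq b c ∈ X → aEq a c ∈ X
  add_congr : ∀ a b c d, aEq a b ∈ X → aEq c d ∈ X → aEq (dadd a c) (dadd b d) ∈ X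
  mul_congr : ∀ a b c d, aEq a b ∈ X → aEq c d ∈ X → aEq (dmul a c) (dmul b d) ∈ X
  lt_congr : ∀ a b c d, aEq a b ∈ X → aEq c d ∈ X → aLt a c ∈ X → aLt b d ∈ X
  thy : ∀ n ∈ A, ∀ s, aSat n s ∈ X

theorem sat_cons {X : Set ℕ} {p : ℕ} {b : Bool} {c : List (ℕ × Bool)} :
    Satisfies X ((p, b) :: c) ↔ ((p ∈ X ↔ b = true) ∨ Satisfies X c) := by
  simp [Satisfies]

theorem sat_nil {X : Set ℕ} : ¬ Satisfies X [] := by simp [Satisfies]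

theorem forall_thyClauses {A X : Set ℕ} :
    (∀ c, Satisfies X (thyClauses A c)) ↔ ∀ n ∈ A, ∀ s, aSat n s ∈ X := by
  constructor
  · intro h n hn s
    have := h (Nat.pair n s)
    simpa [thyClauses, hn, sat_cons, sat_nil] using this
  · intro h c
    by_cases hc : c.unpair.1 ∈ A
    · simpa [thyClauses, hc, sat_cons, sat_nil] using h _ hc _
    · simp [thyClauses, hc, sat_cons, sat_nil]
      exact em _

theorem tc_iff {A X : Set ℕ} :
    (∀ cl ∈ thyClauses A :: tcClauses, ∀ c, Satisfies X (cl c)) ↔ TC A X := by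
  simp only [tcClauses, List.forall_mem_cons, forall_pk, forall_thyClauses, sat_cons, sat_nil,
    or_false, iff_true, Bool.false_eq_true, iff_false, List.not_mem_nil, false_imp_iff, implies_true,
    and_true, forall_const, ← imp_iff_not_or]
  constructor
  · rintro ⟨h0, h1, h2, h3, h4, h5, h6, h7, h8, h9, h10, h11, h12, h13, h14, h15, h16, h17, h18,
      h19, h20, h21, h22, h23, h24, h25⟩
    exact ⟨h1, h2, h3, h4, h5, h6, h7, h8, h9, h10, h11, h12, h13, h14, h15, h16, h17, h18,
      h19, h20, h21, h22, h23, h24, h25, h0⟩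
  · rintro ⟨h1, h2, h3, h4, h5, h6, h7, h8, h9, h10, h11, h12, h13, h14, h15, h16, h17, h18,
      h19, h20, h21, h22, h23, h24, h25, h0⟩
    exact ⟨h0, h1, h2, h3, h4, h5, h6, h7, h8, h9, h10, h11, h12, h13, h14, h15, h16, h17, h18,
      h19, h20, h21, h22, h23, h24, h25⟩

section
variable {α : Type} [Primcodable α] {f g h : α → ℕ}

theorem Primrec.npair (hf : Primrec f) (hg : Primrec g) :
    Primrec fun a => Nat.pair (f a) (g a) := Primrec₂.natPair.comp hf hg

theorem Primrec.cpair (hf : Primrec f) (hg : Primrec g) :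
    Primrec fun a => cpair (f a) (g a) :=
  Primrec.nat_add.comp (Primrec.nat_div.comp (Primrec.nat_mul.comp (Primrec.nat_add.comp hf hg)
    (Primrec.succ.comp (Primrec.nat_add.comp hf hg))) (Primrec.const 2)) hf

theorem Primrec.aSat (hf : Primrec f) (hg : Primrec g) : Primrec fun a => aSat (f a) (g a) :=
  Primrec.npair (Primrec.const 0) (Primrec.npair hf hg)
theorem Primrec.aVal (hf : Primrec f) (hg : Primrec g) (hh : Primrec h) :
    Primrec fun a => aVal (f a) (g a) (h a) :=
  Primrec.npair (Primrec.const 1) (Primrec.npair hf (Primrec.npair hg hh))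
theorem Primrec.aEq (hf : Primrec f) (hg : Primrec g) : Primrec fun a => aEq (f a) (g a) :=
  Primrec.npair (Primrec.const 2) (Primrec.npair hf hg)
theorem Primrec.aLt (hf : Primrec f) (hg : Primrec g) : Primrec fun a => aLt (f a) (g a) :=
  Primrec.npair (Primrec.const 3) (Primrec.npair hf hg)
theorem Primrec.dadd (hf : Primrec f) (hg : Primrec g) : Primrec fun a => dadd (f a) (g a) :=
  Primrec.npair (Primrec.npair hf hg) (Primrec.const 2)
theorem Primrec.dmul (hf : Primrec f) (hg : Primrec g) : Primrec fun a => dmul (f a) (g a) :=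
  Primrec.npair (Primrec.npair hf hg) (Primrec.const 3)
theorem Primrec.dwit (hf : Primrec f) (hg : Primrec g) (hh : Primrec h) :
    Primrec fun a => dwit (f a) (g a) (h a) :=
  Primrec.npair (Primrec.npair hf (Primrec.npair hg hh)) (Primrec.const 4)
theorem Primrec.upd (hf : Primrec f) (hg : Primrec g) (hh : Primrec h) :
    Primrec fun a => upd (f a) (g a) (h a) :=
  Primrec.succ.comp (Primrec.npair hg (Primrec.npair hh hf))
theorem Primrec.clause_cons {c : α → List (ℕ × Bool)} {b : Bool} (hf : Primrec f) (hc : Primrec c) :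
    Primrec fun a => (f a, b) :: c a :=
  Primrec.list_cons.comp (Primrec.pair hf (Primrec.const b)) hc
theorem Primrec.add_succ (hf : Primrec f) (hg : Primrec g) : Primrec fun a => f a + g a + 1 :=
  Primrec.succ.comp (Primrec.nat_add.comp hf hg)
end

theorem primrec_tcClauses : ∀ cl ∈ tcClauses, Primrec cl := by
  have u1 : Primrec fun n : ℕ => n.unpair.1 := Primrec.fst.comp Primrec.unpair
  have u2 : Primrec fun n : ℕ => n.unpair.2 := Primrec.snd.comp Primrec.unpair
  have h1 : Primrec fun n : ℕ => n.unpair.2.unpair.1 := u1.comp u2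
  have h2 : Primrec fun n : ℕ => n.unpair.2.unpair.2.unpair.1 := h1.comp u2
  have h3 : Primrec fun n : ℕ => n.unpair.2.unpair.2.unpair.2.unpair.1 := h2.comp u2
  have h4 : Primrec fun n : ℕ => n.unpair.2.unpair.2.unpair.2.unpair.2 := (u2.comp u2).comp (u2.comp u2)
  simp only [tcClauses, List.forall_mem_cons, List.not_mem_nil, false_imp_iff, implies_true,
    and_true]
  refine ⟨?_, ?_, ?_, ?_, ?_, ?_, ?_, ?_, ?_, ?_, ?_, ?_, ?_, ?_, ?_, ?_, ?_, ?_, ?_, ?_, ?_, ?_,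
    ?_, ?_, ?_⟩ <;> unfold pk
  all_goals
    repeat' first
      | with_reducible exact u1 | with_reducible exact h1 | with_reducible exact h2 | with_reducible exact h3 | with_reducible exact h4
      | with_reducible exact Primrec.const _
      | with_reducible refine Primrec.clause_cons ?_ ?_
      | with_reducible refine Primrec.aSat ?_ ?_
      | with_reducible refine Primrec.aVal ?_ ?_ ?_
      | with_reducible refine Primrec.aEq ?_ ?_
      | with_reducible refine Primrec.aLt ?_ ?_
      | with_reducible refine Primrec.dadd ?_ ?_
      | with_reducible refine Primrec.dmul ?_ ?_
      | with_reducible refine Primrec.dwit ?_ ?_ ?_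
      | with_reducible refine Primrec.upd ?_ ?_ ?_
      | with_reducible refine Primrec.add_succ ?_ ?_
      | with_reducible refine Primrec.cpair ?_ ?_

theorem compX_thyClauses {𝔛 : Set (Set ℕ)} (hS : IsScottSet 𝔛) {A : Set ℕ} (hA : A ∈ 𝔛) :
    CompX 𝔛 (thyClauses A) := by
  classical
  have u1 : Primrec fun n : ℕ => n.unpair.1 := Primrec.fst.comp Primrec.unpair
  have u2 : Primrec fun n : ℕ => n.unpair.2 := Primrec.snd.comp Primrec.unpair
  have hd : CompX 𝔛 fun c : ℕ => decide (c.unpair.1 ∈ A) :=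
    (CompX.of_mem hA).comp hS (.of_primrec hS u1)
  have hc : Primrec fun p : Bool × ℕ =>
      cond p.1 [(aSat p.2.unpair.1 p.2.unpair.2, true)] [(0, true), (0, false)] :=
    Primrec.cond Primrec.fst (Primrec.clause_cons (Primrec.aSat (u1.comp Primrec.snd)
      (u2.comp Primrec.snd)) (Primrec.const [])) (Primrec.const _)
  have := (CompX.of_primrec hS hc).comp hS (hd.pair hS (.of_primrec hS Primrec.id))
  convert this using 2
  simp [thyClauses]

/-! ### First-order satisfaction and the truth class of a model -/

@[simp] theorem satFO_eq {M : Type} {S : AStr M} {v : ℕ → M} {t u : PTerm} :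
    SatFO S v (.eq t u) ↔ t.val S v = u.val S v := by simp [SatFO, Sat]
@[simp] theorem satFO_lt {M : Type} {S : AStr M} {v : ℕ → M} {t u : PTerm} :
    SatFO S v (.lt t u) ↔ S.lt (t.val S v) (u.val S v) := by simp [SatFO, Sat]
@[simp] theorem satFO_not {M : Type} {S : AStr M} {v : ℕ → M} {φ : Fml} :
    SatFO S v (.not φ) ↔ ¬ SatFO S v φ := by simp [SatFO, Sat]
@[simp] theorem satFO_imp {M : Type} {S : AStr M} {v : ℕ → M} {φ ψ : Fml} :
    SatFO S v (.imp φ ψ) ↔ (SatFO S v φ → SatFO S v ψ) := by simp [SatFO, Sat]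
@[simp] theorem satFO_all {M : Type} {S : AStr M} {v : ℕ → M} {φ : Fml} {x : ℕ} :
    SatFO S v (.all x φ) ↔ ∀ a, SatFO S (Function.update v x a) φ := by simp [SatFO, Sat]
@[simp] theorem satFO_ex {M : Type} {S : AStr M} {v : ℕ → M} {φ : Fml} {x : ℕ} :
    SatFO S v (.ex x φ) ↔ ∃ a, SatFO S (Function.update v x a) φ := by simp [Fml.ex]
@[simp] theorem satFO_and {M : Type} {S : AStr M} {v : ℕ → M} {φ ψ : Fml} :
    SatFO S v (.and φ ψ) ↔ (SatFO S v φ ∧ SatFO S v ψ) := by simp [Fml.and]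
@[simp] theorem satFO_or {M : Type} {S : AStr M} {v : ℕ → M} {φ ψ : Fml} :
    SatFO S v (.or φ ψ) ↔ (SatFO S v φ ∨ SatFO S v ψ) := by
  simp [Fml.or, or_iff_not_imp_left]
@[simp] theorem satFO_iff {M : Type} {S : AStr M} {v : ℕ → M} {φ ψ : Fml} :
    SatFO S v (.iff φ ψ) ↔ (SatFO S v φ ↔ SatFO S v ψ) := by
  simp [Fml.iff, iff_def]

section
variable {K : Type} (S : AStr K)

/-- The set of atoms that are true in a structure under the interpretation of the Henkin terms. -/
def trueAtoms : Set ℕ :=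
  {m | (∃ n s, m = aSat n s ∧ SatFO S (fun i => interp S (lk s i)) (fdec n)) ∨
    (∃ t s d, m = aVal t s d ∧ (tdec t).val S (fun i => interp S (lk s i)) = interp S d) ∨
    (∃ a b, m = aEq a b ∧ interp S a = interp S b) ∨
    (∃ a b, m = aLt a b ∧ S.lt (interp S a) (interp S b))}

theorem aSat_mem {n s : ℕ} : aSat n s ∈ trueAtoms S ↔
    SatFO S (fun i => interp S (lk s i)) (fdec n) := by
  simp [trueAtoms, aSat, aVal, aEq, aLt, Nat.pair_eq_pair, and_assoc]
theorem aVal_mem {t s d : ℕ} : aVal t s d ∈ trueAtoms S ↔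
    (tdec t).val S (fun i => interp S (lk s i)) = interp S d := by
  simp [trueAtoms, aSat, aVal, aEq, aLt, Nat.pair_eq_pair, and_assoc]
theorem aEq_mem {a b : ℕ} : aEq a b ∈ trueAtoms S ↔ interp S a = interp S b := by
  simp [trueAtoms, aSat, aVal, aEq, aLt, Nat.pair_eq_pair, and_assoc]
theorem aLt_mem {a b : ℕ} : aLt a b ∈ trueAtoms S ↔ S.lt (interp S a) (interp S b) := by
  simp [trueAtoms, aSat, aVal, aEq, aLt, Nat.pair_eq_pair, and_assoc]

theorem interp_lk_upd (s x d : ℕ) : (fun i => interp S (lk (upd s x d) i)) =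
    Function.update (fun i => interp S (lk s i)) x (interp S d) := by
  funext i
  rw [lk_upd]
  by_cases h : i = x
  · subst h; simp
  · simp [h]

/-- A model of `T`, together with its choice of counterexamples, satisfies all the clauses. -/
theorem tc_trueAtoms {T : Set Fml} (hT : ModelsT S T) (hFO : ∀ φ ∈ T, φ.IsFO) :
    TC (theoryCode T) (trueAtoms S) := by
  constructor <;> simp only [aSat_mem, aVal_mem, aEq_mem, aLt_mem, interp_lk_upd, interp_zero,
    interp_one, interp_add, interp_mul, tdec_var, tdec_zero, tdec_one, tdec_add, tdec_mul,
    fdec_eq, fdec_lt, fdec_not, fdec_imp, fdec_all, satFO_eq, satFO_lt, satFO_not, satFO_imp,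
    satFO_all, PTerm.val]
  case thy =>
    rintro _ ⟨φ, hφ, rfl⟩ s
    rw [fdec_code φ (hFO φ hφ)]
    exact hT φ hφ _
  case all2 =>
    intro x n s h b
    exact interp_wit S x n s h b
  case var_lt => intro x s d e k h; rw [Function.update_of_ne (by omega)]; exact h
  case var_gt => intro x s d e k h; rw [Function.update_of_ne (by omega)]; exact h
  case var_zero => intro x; rw [lk_zero]
  all_goals grind
end

/-- The clauses are satisfiable and computable from the theory, so weak König's lemma yields a truth
class inside the Scott set. -/
theorem exists_tc {𝔛 : Set (Set ℕ)} (hS : IsScottSet 𝔛) {T : Set Fml} (hFO : ∀ φ ∈ T, φ.IsFO)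
    (hCons : ConsistentT T) (hT : theoryCode T ∈ 𝔛) : ∃ X ∈ 𝔛, TC (theoryCode T) X := by
  obtain ⟨K, S, hK⟩ := hCons
  have h0 := tc_iff.2 (tc_trueAtoms S hK hFO)
  obtain ⟨B, hB, h⟩ := hS.exists_satisfies_list (thyClauses (theoryCode T) :: tcClauses)
    (List.forall_mem_cons.2 ⟨compX_thyClauses hS hT,
      fun cl h => .of_primrec hS (primrec_tcClauses cl h)⟩) h0
  exact ⟨B, hB, tc_iff.1 h⟩

/-! ### Reading off a structure from a truth class -/

/-- The structure of Henkin terms given by a truth class; equality is interpreted by the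
atoms `aEq`. -/
def henk (X : Set ℕ) : AStr ℕ := ⟨dzero, dunit, dadd, dmul, fun a b => aLt a b ∈ X⟩

/-- Satisfaction of first-order formulas in the structure of Henkin terms. -/
def Msat (X : Set ℕ) : Fml → (ℕ → ℕ) → Prop
  | .eq t u, v => aEq (t.val (henk X) v) (u.val (henk X) v) ∈ X
  | .lt t u, v => aLt (t.val (henk X) v) (u.val (henk X) v) ∈ X
  | .mem _ _, _ => False
  | .not φ, v => ¬ Msat X φ v
  | .imp φ ψ, v => Msat X φ v → Msat X ψ v
  | .all x φ, v => ∀ d, Msat X φ (Function.update v x d)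
  | .allS _ _, _ => False

namespace TC
variable {A X : Set ℕ}


theorem var (h : TC A X) (x s : ℕ) : aVal (cpair 0 x) s (lk s x) ∈ X := by
  induction s using Nat.strong_induction_on with
  | _ s ih =>
    cases s with
    | zero => rw [lk_zero]; exact h.var_zero x
    | succ m =>
      have h1 := Nat.unpair_right_le m
      have h2 := Nat.unpair_right_le m.unpair.2
      have e : m + 1 = upd m.unpair.2.unpair.2 m.unpair.1 m.unpair.2.unpair.1 := by
        simp [upd]
      rw [e, lk_upd]
      have ih := ih m.unpair.2.unpair.2 (by omega)
      generalize m.unpair.1 = y at *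
      generalize m.unpair.2.unpair.1 = d at *
      generalize m.unpair.2.unpair.2 = s at *
      rcases Nat.lt_trichotomy x y with hxy | rfl | hxy
      · rw [Function.update_of_ne (by omega)]
        obtain ⟨k, rfl⟩ := Nat.exists_eq_add_of_lt hxy
        exact h.var_lt _ _ _ _ _ ih
      · rw [Function.update_self]; exact h.var_self _ _ _
      · rw [Function.update_of_ne (by omega)]
        obtain ⟨k, rfl⟩ := Nat.exists_eq_add_of_lt hxy
        exact h.var_gt _ _ _ _ _ ih

theorem val (h : TC A X) (t : PTerm) (s : ℕ) : aVal t.code s (t.val (henk X) (lk s)) ∈ X := by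
  induction t with
  | var n => exact h.var n s
  | zero => exact h.zero s
  | one => exact h.one s
  | add t u iht ihu => exact h.add _ _ _ _ _ iht ihu
  | mul t u iht ihu => exact h.mul _ _ _ _ _ iht ihu

/-- The truth class is correct about standard formulas. -/
theorem truth (h : TC A X) (φ : Fml) (hφ : φ.IsFO) (s : ℕ) : aSat φ.code s ∈ X ↔ Msat X φ (lk s) := by
  induction φ generalizing s with
  | eq t u => exact ⟨h.eq1 _ _ _ _ _ (h.val t s) (h.val u s), h.eq2 _ _ _ _ _ (h.val t s) (h.val u s)⟩
  | lt t u => exact ⟨h.lt1 _ _ _ _ _ (h.val t s) (h.val u s), h.lt2 _ _ _ _ _ (h.val t s) (h.val u s)⟩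
  | mem => exact hφ.elim
  | allS => exact hφ.elim
  | not φ ih =>
    rw [Msat, ← ih hφ]
    exact ⟨h.not1 _ _, (h.not2 _ _).resolve_right⟩
  | imp φ ψ ih1 ih2 =>
    rw [Msat, ← ih1 hφ.1, ← ih2 hφ.2]
    refine ⟨h.imp1 _ _ _, fun h' => ?_⟩
    by_cases hc : aSat φ.code s ∈ X
    · exact h.imp3 _ _ _ (h' hc)
    · exact (h.imp2 _ _ _).resolve_left hc
  | all x φ ih =>
    simp only [Msat, ← lk_upd, ← ih hφ]
    exact ⟨fun h' d => h.all1 _ _ _ _ h', fun h' => h.all2 _ _ _ (h' _)⟩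

/-- The Henkin property. -/
theorem wit (h : TC A X) (φ : Fml) (hφ : φ.IsFO) (x s : ℕ)
    (hw : Msat X φ (Function.update (lk s) x (dwit x φ.code s))) (d : ℕ) :
    Msat X φ (Function.update (lk s) x d) := by
  rw [← lk_upd, ← h.truth φ hφ] at hw ⊢
  exact h.all1 _ _ _ _ (h.all2 _ _ _ hw)

end TC

/-! ### The definable ultrafilter -/

section
/-- Inverse of the Cantor pairing function, by enumerating the antidiagonals. -/
def cantorUn : ℕ → ℕ × ℕ
  | 0 => (0, 0)
  | n + 1 => if (cantorUn n).2 = 0 then (0, (cantorUn n).1 + 1)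
      else ((cantorUn n).1 + 1, (cantorUn n).2 - 1)

theorem cpair_cantorUn (n : ℕ) : cpair (cantorUn n).1 (cantorUn n).2 = n := by
  induction n with
  | zero => rfl
  | succ n ih =>
    have h1 := cpair_two (cantorUn n).1 (cantorUn n).2
    have h2 := cpair_two (cantorUn (n + 1)).1 (cantorUn (n + 1)).2
    rw [ih] at h1
    rw [cantorUn] at h2 ⊢
    generalize (cantorUn n).1 = a at *
    generalize (cantorUn n).2 = b at *
    split_ifs at h2 ⊢ with hb
    · subst hb; simp only at h2 ⊢; nlinarith
    · obtain ⟨b, rfl⟩ := Nat.exists_eq_succ_of_ne_zero hb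
      simp only [Nat.succ_eq_add_one, Nat.add_sub_cancel] at h1 h2 ⊢
      nlinarith

theorem cantorUn_cpair (a b : ℕ) : cantorUn (cpair a b) = (a, b) :=
  Prod.ext_iff.2 (cpair_inj (cpair_cantorUn (cpair a b)))

theorem primrec_cantorUn : Primrec cantorUn := by
  have h1 : Primrec fun p : ℕ × ℕ × ℕ => p.2.1 := Primrec.fst.comp Primrec.snd
  have h2 : Primrec fun p : ℕ × ℕ × ℕ => p.2.2 := Primrec.snd.comp Primrec.snd
  have hs : Primrec₂ fun (_ : ℕ) (p : ℕ × ℕ) =>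
      if p.2 = 0 then (0, p.1 + 1) else (p.1 + 1, p.2 - 1) :=
    Primrec.ite (Primrec.eq.comp h2 (Primrec.const 0))
      (Primrec.pair (Primrec.const 0) (Primrec.succ.comp h1))
      (Primrec.pair (Primrec.succ.comp h1) (Primrec.pred.comp h2))
  refine (Primrec.nat_rec₁ (0, 0) hs).of_eq fun n => ?_
  induction n with
  | zero => rfl
  | succ n ih => rw [cantorUn, ← ih]

theorem natStr_pairRel {p a b : ℕ} : natStr.PairRel p a b ↔ p = cpair a b := by
  have := cpair_two a b
  simp only [AStr.PairRel, natStr, AStr.two]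
  omega

/-- The properties of a definable ultrafilter that are used in the ultrapower construction. -/
structure UF (𝔛 U : Set (Set ℕ)) : Prop where
  sub : ∀ A ∈ U, A ∈ 𝔛
  inter : ∀ A ∈ U, ∀ B ∈ U, A ∩ B ∈ U
  mono : ∀ A ∈ U, ∀ B ∈ 𝔛, A ⊆ B → B ∈ U
  compl : ∀ A ∈ 𝔛, (Aᶜ ∈ U ↔ A ∉ U)
  cofin : ∀ A ∈ 𝔛, Aᶜ.Finite → A ∈ U
  dfn : ∀ B ∈ 𝔛, {n | {k | Nat.pair n k ∈ B} ∈ U} ∈ 𝔛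

variable {𝔛 U : Set (Set ℕ)}

theorem evens_mem (hS : IsScottSet 𝔛) : {n : ℕ | n % 2 = 0} ∈ 𝔛 := by
  refine CompX.mem hS (f := fun n => decide (n % 2 = 0)) (.of_primrec hS ?_) (by simp)
  exact (Primrec.eq.comp (Primrec.nat_mod.comp Primrec.id (Primrec.const 2))
    (Primrec.const 0)).decide

/-- A member of `𝔛` that meets every member of the ultrafilter in an infinite set belongs to it, by
maximality. -/
theorem ultra_mem (hS : IsScottSet 𝔛) (hU : IsUltraOn {A | A ∈ 𝔛 ∧ A.Infinite} U)
    {A : Set ℕ} (hA : A ∈ 𝔛) (h : ∀ B ∈ U, (B ∩ A).Infinite) : A ∈ U := by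
  obtain ⟨⟨hsub, ⟨B0, hB0⟩, -, hup, hdir⟩, hmax⟩ := hU
  have key : {C | (C ∈ 𝔛 ∧ C.Infinite) ∧ ∃ B ∈ U, B ∩ A ⊆ C} = U := by
    refine hmax _ ⟨fun C hC => hC.1, ⟨B0, hsub hB0, B0, hB0, Set.inter_subset_left⟩, ?_, ?_, ?_⟩
      fun C hC => ⟨hsub hC, C, hC, Set.inter_subset_left⟩
    · intro heq
      have h1 : {n : ℕ | n % 2 = 0} ∈ {C | (C ∈ 𝔛 ∧ C.Infinite) ∧ ∃ B ∈ U, B ∩ A ⊆ C} := by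
        rw [heq]
        exact ⟨evens_mem hS, Set.infinite_of_injective_forall_mem (f := fun n => 2 * n)
          (fun a b h => by simpa using h) (by simp)⟩
      have h2 : {n : ℕ | n % 2 = 0}ᶜ ∈ {C | (C ∈ 𝔛 ∧ C.Infinite) ∧ ∃ B ∈ U, B ∩ A ⊆ C} := by
        rw [heq]
        exact ⟨hS.2.2.1 _ (evens_mem hS), Set.infinite_of_injective_forall_mem
          (f := fun n => 2 * n + 1) (fun a b h => by simpa using h)
          (by intro n; simp [Nat.add_mod])⟩
      obtain ⟨-, B1, hB1, hs1⟩ := h1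
      obtain ⟨-, B2, hB2, hs2⟩ := h2
      obtain ⟨C, hC, hC1, hC2⟩ := hdir _ hB1 _ hB2
      obtain ⟨n, hn, hnA⟩ := (h C hC).nonempty
      exact hs2 ⟨hC2 hn, hnA⟩ (hs1 ⟨hC1 hn, hnA⟩)
    · rintro C ⟨hC, B, hB, hs⟩ D hD hCD
      exact ⟨hD, B, hB, hs.trans hCD⟩
    · rintro C1 ⟨hC1, B1, hB1, hs1⟩ C2 ⟨hC2, B2, hB2, hs2⟩
      obtain ⟨C, hC, h1, h2⟩ := hdir _ hB1 _ hB2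
      have hs : C ∩ A ⊆ C1 ∩ C2 := fun n hn => ⟨hs1 ⟨h1 hn.1, hn.2⟩, hs2 ⟨h2 hn.1, hn.2⟩⟩
      exact ⟨C1 ∩ C2, ⟨⟨hS.inter hC1.1 hC2.1, (h C hC).mono hs⟩, C, hC, hs⟩,
        Set.inter_subset_left, Set.inter_subset_right⟩
  rw [← key]
  exact ⟨⟨hA, (h B0 hB0).mono Set.inter_subset_right⟩, B0, hB0, Set.inter_subset_right⟩

theorem UF.of_ultra (hS : IsScottSet 𝔛) (hU : IsUltraOn {A | A ∈ 𝔛 ∧ A.Infinite} U)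
    (hD : natStr.DefinableFam 𝔛 U) : UF 𝔛 U := by
  have hmem := @ultra_mem 𝔛 U hS hU
  obtain ⟨⟨hsub, hne, -, hup, hdir⟩, -⟩ := hU
  have hinter : ∀ A ∈ U, ∀ B ∈ U, A ∩ B ∈ U := by
    intro A hA B hB
    obtain ⟨C, hC, h1, h2⟩ := hdir _ hA _ hB
    have hs : C ⊆ A ∩ B := Set.subset_inter h1 h2
    exact hup C hC _ ⟨hS.inter (hsub hA).1 (hsub hB).1, (hsub hC).2.mono hs⟩ hs
  refine ⟨fun A hA => (hsub hA).1, hinter,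
    fun A hA B hB hs => hup A hA B ⟨hB, (hsub hA).2.mono hs⟩ hs, ?_, ?_, ?_⟩
  · intro A hA
    constructor
    · intro h1 h2
      simpa using (hsub (hinter _ h2 _ h1)).2.nonempty
    · intro hn
      by_contra hc
      apply hn
      refine hmem hA fun B hB hf => hc (hmem (hS.2.2.1 _ hA) fun B' hB' hf' => ?_)
      refine (hsub (hinter _ hB _ hB')).2 ((hf.union hf').subset fun n hn => ?_)
      by_cases hnA : n ∈ A
      · exact Or.inl ⟨hn.1, hnA⟩
      · exact Or.inr ⟨hn.2, hnA⟩
  · intro A hA hf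
    refine hmem hA fun B hB hf' => (hsub hB).2 ((hf.union hf').subset fun n hn => ?_)
    by_cases hnA : n ∈ A
    · exact Or.inr ⟨hn, hnA⟩
    · exact Or.inl hnA
  · intro B hB
    have hA : {p | Nat.pair (cantorUn p).1 (cantorUn p).2 ∈ B} ∈ 𝔛 :=
      CompX.preimage hS hB (.of_primrec hS
        (Primrec.npair (Primrec.fst.comp primrec_cantorUn) (Primrec.snd.comp primrec_cantorUn)))
    have := hD _ hA
    simpa [AStr.SliceAt, natStr_pairRel, cantorUn_cpair] using this

end

/-! ### The definable ultrapower of the structure of Henkin terms -/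

theorem PTerm.val_congr {M : Type} {S : AStr M} {v w : ℕ → M} (t : PTerm)
    (h : ∀ i ∈ t.vars, v i = w i) : t.val S v = t.val S w := by
  induction t with
  | var n => exact h n (by simp [vars])
  | zero => rfl
  | one => rfl
  | add t u iht ihu =>
    simp only [vars, Finset.mem_union] at h
    rw [val, val, iht fun i hi => h i (.inl hi), ihu fun i hi => h i (.inr hi)]
  | mul t u iht ihu =>
    simp only [vars, Finset.mem_union] at h
    rw [val, val, iht fun i hi => h i (.inl hi), ihu fun i hi => h i (.inr hi)]

theorem update_congr_of {M : Type} {v w : ℕ → M} {s : Finset ℕ} {x : ℕ}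
    (h : ∀ i ∈ s.erase x, v i = w i) (d : M) :
    ∀ i ∈ s, Function.update v x d i = Function.update w x d i := by
  intro i hi
  by_cases hx : i = x
  · subst hx; simp
  · simp [hx, h i (Finset.mem_erase.2 ⟨hx, hi⟩)]

theorem Msat_congr {X : Set ℕ} (φ : Fml) {v w : ℕ → ℕ} (h : ∀ i ∈ φ.freeN, v i = w i) :
    Msat X φ v ↔ Msat X φ w := by
  induction φ generalizing v w with
  | eq t u =>
    simp only [Fml.freeN, Finset.mem_union] at h
    rw [Msat, Msat, t.val_congr fun i hi => h i (.inl hi), u.val_congr fun i hi => h i (.inr hi)]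
  | lt t u =>
    simp only [Fml.freeN, Finset.mem_union] at h
    rw [Msat, Msat, t.val_congr fun i hi => h i (.inl hi), u.val_congr fun i hi => h i (.inr hi)]
  | mem => rfl
  | allS => rfl
  | not φ ih => rw [Msat, Msat, ih h]
  | imp φ ψ ih1 ih2 =>
    simp only [Fml.freeN, Finset.mem_union] at h
    rw [Msat, Msat, ih1 fun i hi => h i (.inl hi), ih2 fun i hi => h i (.inr hi)]
  | all x φ ih => exact forall_congr' fun d => ih (update_congr_of h d)

theorem Fml.exists_bound (φ : Fml) : ∃ k, ∀ i ∈ φ.freeN, i < k :=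
  ⟨φ.freeN.sup id + 1, fun _ hi => Nat.lt_succ_of_le (Finset.le_sup (f := id) hi)⟩

/-- A Scott set with a definable ultrafilter and a truth class. -/
structure Ctx where
  𝔛 : Set (Set ℕ)
  U : Set (Set ℕ)
  A : Set ℕ
  X : Set ℕ
  hS : IsScottSet 𝔛
  uf : UF 𝔛 U
  hX : X ∈ 𝔛
  tc : TC A X

namespace Ctx
variable (C : Ctx)

/-- The sequences of Henkin terms that belong to the Scott set. -/
abbrev Sq : Type := {f : ℕ → ℕ // CompX C.𝔛 f}

variable {C}

theorem eqSet_mem {f g : ℕ → ℕ} (hf : CompX C.𝔛 f) (hg : CompX C.𝔛 g) :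
    {n | aEq (f n) (g n) ∈ C.X} ∈ C.𝔛 :=
  CompX.preimage C.hS C.hX (CompX.comp₂ C.hS (f := aEq) (Primrec.aEq Primrec.fst Primrec.snd) hf hg)

theorem ltSet_mem {f g : ℕ → ℕ} (hf : CompX C.𝔛 f) (hg : CompX C.𝔛 g) :
    {n | aLt (f n) (g n) ∈ C.X} ∈ C.𝔛 :=
  CompX.preimage C.hS C.hX (CompX.comp₂ C.hS (f := aLt) (Primrec.aLt Primrec.fst Primrec.snd) hf hg)

theorem mem_U_of_forall {B : Set ℕ} (h : ∀ n, n ∈ B) : B ∈ C.U := by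
  have hB : B = Set.univ := Set.eq_univ_of_forall h
  obtain ⟨D, hD⟩ := C.hS.1
  have : B ∈ C.𝔛 := by
    rw [hB, ← Set.union_compl_self D]
    exact C.hS.2.1 _ hD _ (C.hS.2.2.1 _ hD)
  exact C.uf.cofin _ this (by simp [hB])

variable (C)

/-- Equality modulo the ultrafilter. -/
def setoid : Setoid C.Sq where
  r f g := {n | aEq (f.1 n) (g.1 n) ∈ C.X} ∈ C.U
  iseqv := by
    refine ⟨fun f => mem_U_of_forall fun n => C.tc.eq_refl _, fun {f g} h => ?_,
      fun {f g k} h1 h2 => ?_⟩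
    · exact C.uf.mono _ h _ (eqSet_mem g.2 f.2) fun n hn => C.tc.eq_symm _ _ hn
    · exact C.uf.mono _ (C.uf.inter _ h1 _ h2) _ (eqSet_mem f.2 k.2)
        fun n hn => C.tc.eq_trans _ _ _ hn.1 hn.2

/-- The carrier of the definable ultrapower. -/
def N : Type := Quotient C.setoid

variable {C}

/-- The class of a sequence in the definable ultrapower. -/
def cls (f : C.Sq) : C.N := Quotient.mk _ f

theorem cls_eq {f g : C.Sq} : cls f = cls g ↔ {n | aEq (f.1 n) (g.1 n) ∈ C.X} ∈ C.U :=
  Quotient.eq (r := C.setoid)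

theorem exists_cls (a : C.N) : ∃ f, cls f = a := Quotient.exists_rep a

theorem compX_dadd {f g : ℕ → ℕ} (hf : CompX C.𝔛 f) (hg : CompX C.𝔛 g) :
    CompX C.𝔛 fun n => dadd (f n) (g n) :=
  CompX.comp₂ C.hS (f := dadd) (Primrec.dadd Primrec.fst Primrec.snd) hf hg

theorem compX_dmul {f g : ℕ → ℕ} (hf : CompX C.𝔛 f) (hg : CompX C.𝔛 g) :
    CompX C.𝔛 fun n => dmul (f n) (g n) :=
  CompX.comp₂ C.hS (f := dmul) (Primrec.dmul Primrec.fst Primrec.snd) hf hg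

/-- The constant sequence. -/
def cst (d : ℕ) : C.Sq := ⟨fun _ => d, CompX.const C.hS d⟩

variable (C) in
/-- The definable ultrapower. -/
def str : AStr C.N where
  zero := cls (cst dzero)
  one := cls (cst dunit)
  add := Quotient.map₂ (fun f g => ⟨fun n => dadd (f.1 n) (g.1 n), compX_dadd f.2 g.2⟩)
    fun f f' h g g' h' => C.uf.mono _ (C.uf.inter _ h _ h') _
      (eqSet_mem (compX_dadd f.2 g.2) (compX_dadd f'.2 g'.2))
      fun _ hn => C.tc.add_congr _ _ _ _ hn.1 hn.2
  mul := Quotient.map₂ (fun f g => ⟨fun n => dmul (f.1 n) (g.1 n), compX_dmul f.2 g.2⟩)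
    fun f f' h g g' h' => C.uf.mono _ (C.uf.inter _ h _ h') _
      (eqSet_mem (compX_dmul f.2 g.2) (compX_dmul f'.2 g'.2))
      fun _ hn => C.tc.mul_congr _ _ _ _ hn.1 hn.2
  lt := Quotient.lift₂ (fun f g => {n | aLt (f.1 n) (g.1 n) ∈ C.X} ∈ C.U)
    fun f g f' g' h h' => propext ⟨fun hl => C.uf.mono _ (C.uf.inter _ hl _ (C.uf.inter _ h _ h')) _
        (ltSet_mem f'.2 g'.2) fun _ hn => C.tc.lt_congr _ _ _ _ hn.2.1 hn.2.2 hn.1,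
      fun hl => C.uf.mono _ (C.uf.inter _ hl _ (C.uf.inter _ h _ h')) _
        (ltSet_mem f.2 g.2) fun _ hn => C.tc.lt_congr _ _ _ _ (C.tc.eq_symm _ _ hn.2.1)
          (C.tc.eq_symm _ _ hn.2.2) hn.1⟩

theorem str_lt {f g : C.Sq} : C.str.lt (cls f) (cls g) ↔ {n | aLt (f.1 n) (g.1 n) ∈ C.X} ∈ C.U :=
  Iff.rfl

/-- Terms are evaluated pointwise in the ultrapower. -/
theorem exists_val (v : ℕ → C.Sq) (t : PTerm) : ∃ g : C.Sq,
    (∀ n, g.1 n = t.val (henk C.X) fun i => (v i).1 n) ∧ t.val C.str (fun i => cls (v i)) = cls g := by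
  induction t with
  | var n => exact ⟨v n, fun _ => rfl, rfl⟩
  | zero => exact ⟨cst dzero, fun _ => rfl, rfl⟩
  | one => exact ⟨cst dunit, fun _ => rfl, rfl⟩
  | add t u iht ihu =>
    obtain ⟨g, hg, hg'⟩ := iht
    obtain ⟨k, hk, hk'⟩ := ihu
    refine ⟨⟨fun n => dadd (g.1 n) (k.1 n), compX_dadd g.2 k.2⟩, fun n => ?_, ?_⟩
    · simp only [hg, hk]; rfl
    · rw [PTerm.val, hg', hk']; rfl
  | mul t u iht ihu =>
    obtain ⟨g, hg, hg'⟩ := iht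
    obtain ⟨k, hk, hk'⟩ := ihu
    refine ⟨⟨fun n => dmul (g.1 n) (k.1 n), compX_dmul g.2 k.2⟩, fun n => ?_, ?_⟩
    · simp only [hg, hk]; rfl
    · rw [PTerm.val, hg', hk']; rfl

/-- Finitely many sequences in the Scott set are the values of a sequence of coded valuations. -/
theorem exists_valuation {𝔛 : Set (Set ℕ)} (hS : IsScottSet 𝔛) (v : ℕ → ℕ → ℕ) (k : ℕ)
    (hv : ∀ i < k, CompX 𝔛 (v i)) :
    ∃ s : ℕ → ℕ, CompX 𝔛 s ∧ ∀ n, ∀ i < k, lk (s n) i = v i n := by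
  induction k with
  | zero => exact ⟨fun _ => 0, CompX.const hS 0, by simp⟩
  | succ k ih =>
    obtain ⟨s, hs, h⟩ := ih fun i hi => hv i (by omega)
    have hp : Primrec₂ fun a b : ℕ => upd a k b :=
      Primrec.upd Primrec.fst (Primrec.const k) Primrec.snd
    refine ⟨_, CompX.comp₂ hS hp hs (hv k (by omega)), fun n i hi => ?_⟩
    rw [lk_upd]
    by_cases hik : i = k
    · subst hik; simp
    · simpa [hik] using h n i (by omega)

theorem satSet_mem (φ : Fml) (hφ : φ.IsFO) (v : ℕ → C.Sq) :
    {n | Msat C.X φ fun i => (v i).1 n} ∈ C.𝔛 := by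
  obtain ⟨k, hk⟩ := φ.exists_bound
  obtain ⟨s, hs, h⟩ := exists_valuation C.hS (fun i => (v i).1) k fun i _ => (v i).2
  have hp : Primrec₂ fun (_ : ℕ) (s : ℕ) => aSat φ.code s :=
    Primrec.aSat (Primrec.const _) Primrec.snd
  have := CompX.preimage C.hS C.hX (CompX.comp₂ C.hS hp hs hs)
  convert this using 4 with n
  rw [C.tc.truth φ hφ]
  exact Msat_congr φ fun i hi => (h n i (hk i hi)).symm

theorem cls_update (v : ℕ → C.Sq) (x : ℕ) (f : C.Sq) :
    Function.update (fun i => cls (v i)) x (cls f) = fun i => cls (Function.update v x f i) := by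
  funext i
  by_cases h : i = x
  · subst h; simp
  · simp [h]

theorem val_update (v : ℕ → C.Sq) (x : ℕ) (f : C.Sq) (n : ℕ) :
    (fun i => (Function.update v x f i).1 n) = Function.update (fun i => (v i).1 n) x (f.1 n) := by
  funext i
  by_cases h : i = x
  · subst h; simp
  · simp [h]

/-- Łoś's theorem for the definable ultrapower. -/
theorem los (φ : Fml) (hφ : φ.IsFO) (v : ℕ → C.Sq) :
    SatFO C.str (fun i => cls (v i)) φ ↔ {n | Msat C.X φ fun i => (v i).1 n} ∈ C.U := by
  induction φ generalizing v with
  | eq t u =>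
    obtain ⟨g, hg, hg'⟩ := exists_val v t
    obtain ⟨k, hk, hk'⟩ := exists_val v u
    rw [satFO_eq, hg', hk', cls_eq]
    simp only [Msat, hg, hk]
  | lt t u =>
    obtain ⟨g, hg, hg'⟩ := exists_val v t
    obtain ⟨k, hk, hk'⟩ := exists_val v u
    rw [satFO_lt, hg', hk', str_lt]
    simp only [Msat, hg, hk]
  | mem => exact hφ.elim
  | allS => exact hφ.elim
  | not φ ih =>
    rw [satFO_not, ih hφ, ← C.uf.compl _ (satSet_mem φ hφ v)]
    rfl
  | imp φ ψ ih1 ih2 =>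
    have h1 := satSet_mem φ hφ.1 v
    have h2 := satSet_mem ψ hφ.2 v
    have h3 := satSet_mem (.imp φ ψ) hφ v
    rw [satFO_imp, ih1 hφ.1, ih2 hφ.2]
    constructor
    · intro h
      by_cases hc : {n | Msat C.X φ fun i => (v i).1 n} ∈ C.U
      · exact C.uf.mono _ (h hc) _ h3 fun n hn _ => hn
      · exact C.uf.mono _ ((C.uf.compl _ h1).2 hc) _ h3 fun n hn hn' => (hn hn').elim
    · intro h hc
      exact C.uf.mono _ (C.uf.inter _ h _ hc) _ h2 fun n hn => hn.1 hn.2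
  | all x φ ih =>
    have h3 := satSet_mem (.all x φ) hφ v
    rw [satFO_all]
    constructor
    · intro h
      obtain ⟨k, hk⟩ := φ.exists_bound
      obtain ⟨s, hs, hsv⟩ := exists_valuation C.hS (fun i => (v i).1) k fun i _ => (v i).2
      have hp : Primrec₂ fun (_ : ℕ) (s : ℕ) => dwit x φ.code s :=
        Primrec.dwit (Primrec.const _) (Primrec.const _) Primrec.snd
      have hw : CompX C.𝔛 fun n => dwit x φ.code (s n) :=
        CompX.comp₂ (f := fun _ s => dwit x φ.code s) C.hS hp hs hs
      have := h (cls ⟨_, hw⟩)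
      rw [cls_update, ih hφ] at this
      refine C.uf.mono _ this _ h3 fun n hn d => ?_
      have e : ∀ d, Msat C.X φ (Function.update (fun i => (v i).1 n) x d) ↔
          Msat C.X φ (Function.update (lk (s n)) x d) := fun d =>
        Msat_congr φ fun i hi => by
          by_cases hx : i = x
          · subst hx; simp
          · simp [hx, hsv n i (hk i hi)]
      rw [e]
      refine C.tc.wit φ hφ x (s n) ?_ d
      rw [← e]
      simpa only [Set.mem_ofPred_eq, val_update] using hn
    · intro h a
      obtain ⟨f, rfl⟩ := exists_cls a
      rw [cls_update, ih hφ]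
      refine C.uf.mono _ h _ (satSet_mem φ hφ _) fun n hn => ?_
      simp only [Set.mem_ofPred_eq, val_update]
      exact hn _

theorem exists_lk (v : ℕ → ℕ) (k : ℕ) : ∃ s, ∀ i < k, lk s i = v i := by
  induction k with
  | zero => exact ⟨0, by simp⟩
  | succ k ih =>
    obtain ⟨s, h⟩ := ih
    refine ⟨upd s k (v k), fun i hi => ?_⟩
    rw [lk_upd]
    by_cases hik : i = k
    · subst hik; simp
    · simpa [hik] using h i (by omega)

theorem modelsT {T : Set Fml} (hFO : ∀ φ ∈ T, φ.IsFO) (hT : C.A = theoryCode T) :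
    ModelsT C.str T := by
  intro φ hφ w
  choose v hv using fun i => exists_cls (w i)
  obtain rfl : (fun i => cls (v i)) = w := funext hv
  rw [los φ (hFO φ hφ)]
  refine mem_U_of_forall fun n => ?_
  obtain ⟨k, hk⟩ := φ.exists_bound
  obtain ⟨s, hs⟩ := exists_lk (fun i => (v i).1 n) k
  rw [Set.mem_ofPred_eq, ← Msat_congr φ fun i hi => hs i (hk i hi), ← C.tc.truth φ (hFO φ hφ)]
  exact C.tc.thy _ (hT ▸ ⟨φ, hφ, rfl⟩) s

end Ctx

/-! ### Saturation of the definable ultrapower -/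

theorem CompX.of_computable {𝔛 : Set (Set ℕ)} (hS : IsScottSet 𝔛) {f : ℕ → Bool}
    (hf : Computable f) : CompX 𝔛 f := by
  obtain ⟨A, hA⟩ := hS.1
  refine ⟨fun n => Encodable.encode (f n), ⟨A, hA, RecursiveIn.of_partrec ?_⟩, fun n => rfl⟩
  have := Computable.encode.comp hf
  exact Partrec.nat_iff.1 this.partrec

/-- The greedy conjunction of the first formulas of a sequence: `φ m` is required only if this is
consistent with what has been required before. -/
def greedy (φ : ℕ → Fml) : ℕ → Fml
  | 0 => .eq .zero .zero
  | m + 1 => (greedy φ m).and (.imp (.ex 0 ((greedy φ m).and (φ m))) (φ m))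

theorem greedy_isFO {φ : ℕ → Fml} (h : ∀ m, (φ m).IsFO) (m : ℕ) : (greedy φ m).IsFO := by
  induction m with
  | zero => trivial
  | succ m ih => simp [greedy, Fml.and, Fml.ex, Fml.IsFO, ih, h]

theorem greedy_free {φ : ℕ → Fml} {k : ℕ} (h : ∀ m, ∀ i ∈ (φ m).freeN, i < k + 1) (m : ℕ) :
    ∀ i ∈ (greedy φ m).freeN, i < k + 1 := by
  induction m with
  | zero => simp [greedy, Fml.freeN, PTerm.vars]
  | succ m ih =>
    intro i hi
    simp only [greedy, Fml.and, Fml.ex, Fml.freeN, Finset.mem_union, Finset.mem_erase] at hi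
    grind

@[simp] theorem Msat_and {X : Set ℕ} {φ ψ : Fml} {v : ℕ → ℕ} :
    Msat X (φ.and ψ) v ↔ Msat X φ v ∧ Msat X ψ v := by
  simp [Fml.and, Msat]

@[simp] theorem Msat_ex {X : Set ℕ} {φ : Fml} {x : ℕ} {v : ℕ → ℕ} :
    Msat X (φ.ex x) v ↔ ∃ d, Msat X φ (Function.update v x d) := by
  simp [Fml.ex, Msat]

theorem TC.greedy_sat {A X : Set ℕ} (h : TC A X) (φ : ℕ → Fml) (v : ℕ → ℕ) (m : ℕ) :
    ∃ d, Msat X (greedy φ m) (Function.update v 0 d) := by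
  induction m with
  | zero => exact ⟨0, h.eq_refl _⟩
  | succ m ih =>
    simp only [greedy, Msat_and, Msat, Msat_ex, Function.update_idem]
    by_cases hc : ∃ d, Msat X (greedy φ m) (Function.update v 0 d) ∧
        Msat X (φ m) (Function.update v 0 d)
    · obtain ⟨d, hd⟩ := hc
      exact ⟨d, hd.1, fun _ => hd.2⟩
    · obtain ⟨d, hd⟩ := ih
      exact ⟨d, hd, fun h => (hc h).elim⟩

theorem greedy_mono {X : Set ℕ} (φ : ℕ → Fml) (v : ℕ → ℕ) {m n : ℕ} (hmn : m ≤ n)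
    (h : Msat X (greedy φ n) v) : Msat X (greedy φ m) v := by
  induction hmn with
  | refl => exact h
  | step _ ih =>
    simp only [greedy, Msat_and] at h
    exact ih h.1

theorem compX_greedy {𝔛 : Set (Set ℕ)} (hS : IsScottSet 𝔛) {φ : ℕ → Fml}
    (he : CompX 𝔛 fun m => (φ m).code) : CompX 𝔛 fun m => (greedy φ m).code := by
  have hand : ∀ {f g : ℕ × ℕ → ℕ}, Primrec f → Primrec g →
      Primrec fun p => cpair 7 (cpair 8 (cpair (f p) (cpair 7 (g p)))) := fun hf hg =>
    Primrec.cpair (Primrec.const 7) (Primrec.cpair (Primrec.const 8)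
      (Primrec.cpair hf (Primrec.cpair (Primrec.const 7) hg)))
  have h1 := hand Primrec.snd Primrec.fst
  have h2 : Primrec fun p : ℕ × ℕ => cpair 7 (cpair 9 (cpair 0 (cpair 7
      (cpair 7 (cpair 8 (cpair p.2 (cpair 7 p.1))))))) :=
    Primrec.cpair (Primrec.const 7) (Primrec.cpair (Primrec.const 9)
      (Primrec.cpair (Primrec.const 0) (Primrec.cpair (Primrec.const 7) h1)))
  have h3 := hand Primrec.snd (Primrec.cpair (Primrec.const 8) (Primrec.cpair h2 Primrec.fst))
  have h4 : CompX 𝔛 fun p : ℕ × ℕ => ((φ p.1).code, p.2) :=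
    (he.comp hS (.of_primrec hS Primrec.fst)).pair hS (.of_primrec hS Primrec.snd)
  exact CompX.nat_rec _ ((CompX.of_primrec hS h3).comp hS h4) rfl fun n => rfl

namespace Ctx
variable {C : Ctx}

/-- A sequence of formulas coded in the Scott set, in finitely many parameters, every initial
segment of which is realized, is realized. -/
theorem realize {φ : ℕ → Fml} (hFO : ∀ m, (φ m).IsFO) {k : ℕ}
    (hk : ∀ m, ∀ i ∈ (φ m).freeN, i < k + 1) (he : CompX C.𝔛 fun m => (φ m).code)
    (par : ℕ → C.N)
    (hfin : ∀ m, ∃ a, ∀ i < m, SatFO C.str (Function.update par 0 a) (φ i)) :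
    ∃ a, ∀ m, SatFO C.str (Function.update par 0 a) (φ m) := by
  choose v hv using fun i => exists_cls (par i)
  obtain rfl : (fun i => cls (v i)) = par := funext hv
  obtain ⟨s, hs, hsv⟩ := exists_valuation C.hS (fun i => (v i).1) (k + 1) fun i _ => (v i).2
  have hg : CompX C.𝔛 fun n => (Fml.not (greedy φ n)).code :=
    CompX.comp₂ (f := fun a b => cpair a b) C.hS (Primrec.cpair Primrec.fst Primrec.snd)
      (CompX.const C.hS 7) (compX_greedy C.hS he)
  let f : C.Sq := ⟨fun n => dwit 0 (Fml.not (greedy φ n)).code (s n),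
    CompX.comp₂ (f := fun a b => dwit 0 a b) C.hS
      (Primrec.dwit (Primrec.const 0) Primrec.fst Primrec.snd) hg hs⟩
  -- the witness sequence satisfies the greedy conjunctions from some index on
  have h1 : ∀ m, SatFO C.str (Function.update (fun i => cls (v i)) 0 (cls f)) (greedy φ m) := by
    intro m
    rw [cls_update, los _ (greedy_isFO hFO m)]
    refine C.uf.cofin _ (satSet_mem _ (greedy_isFO hFO m) _) ((Set.finite_lt_nat m).subset ?_)
    intro n hn
    by_contra hlt
    refine hn ?_
    rw [Set.mem_ofPred_eq, val_update]
    refine greedy_mono φ _ (not_lt.1 hlt) ?_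
    have e : ∀ d, Msat C.X (greedy φ n) (Function.update (fun i => (v i).1 n) 0 d) ↔
        Msat C.X (greedy φ n) (Function.update (lk (s n)) 0 d) := fun d =>
      Msat_congr _ fun i hi => by
        by_cases hx : i = 0
        · subst hx; simp
        · simp [hx, hsv n i (greedy_free hk n i hi)]
    rw [e]
    by_contra hc
    obtain ⟨d, hd⟩ := C.tc.greedy_sat φ (lk (s n)) n
    exact C.tc.wit (.not (greedy φ n)) (greedy_isFO hFO n) 0 (s n) hc d hd
  -- in the ultrapower the greedy conjunctions are the full conjunctions
  have h2 : ∀ m a, SatFO C.str (Function.update (fun i => cls (v i)) 0 a) (greedy φ m) ↔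
      ∀ i < m, SatFO C.str (Function.update (fun i => cls (v i)) 0 a) (φ i) := by
    intro m
    induction m with
    | zero => simp [greedy]
    | succ m ih =>
      intro a
      obtain ⟨b, hb⟩ := hfin (m + 1)
      have hex : ∃ b, SatFO C.str (Function.update (fun i => cls (v i)) 0 b) (greedy φ m) ∧
          SatFO C.str (Function.update (fun i => cls (v i)) 0 b) (φ m) :=
        ⟨b, (ih b).2 fun i hi => hb i (by omega), hb m (by omega)⟩
      simp only [greedy, satFO_and, satFO_imp, satFO_ex, Function.update_idem, ih] at hex ⊢
      simp only [hex, true_imp_iff, Nat.lt_succ_iff_lt_or_eq, or_imp, forall_and, forall_eq]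
  exact ⟨cls f, fun m => (h2 (m + 1) _).1 (h1 _) m (by omega)⟩

theorem recSat : C.str.RecSat := by
  intro p k par hp hcomp hfin
  classical
  have hupd : ∀ a : C.N, (fun i => if i = 0 then a else par i) = Function.update par 0 a := by
    intro a; funext i; simp [Function.update_apply]
  simp only [hupd] at hfin ⊢
  let φ : ℕ → Fml := fun m => if h : ∃ φ ∈ p, Fml.code φ = m then h.choose else .eq .zero .zero
  have hpos : ∀ m (h : ∃ φ ∈ p, Fml.code φ = m), φ m ∈ p ∧ (φ m).code = m := by
    intro m h
    simp only [φ, dif_pos h]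
    exact h.choose_spec
  have hneg : ∀ m (h : ¬ ∃ φ ∈ p, Fml.code φ = m), φ m = .eq .zero .zero := by
    intro m h
    simp only [φ, dif_neg h]
  suffices key : ∃ a, ∀ m, SatFO C.str (Function.update par 0 a) (φ m) by
    obtain ⟨a, ha⟩ := key
    refine ⟨a, fun ψ hψ => ?_⟩
    have h := hpos ψ.code ⟨ψ, hψ, rfl⟩
    have e : φ ψ.code = ψ := by
      rw [← fdec_code _ (hp _ h.1).1, h.2, fdec_code _ (hp _ hψ).1]
    exact e ▸ ha ψ.code
  refine realize (k := k) ?_ ?_ ?_ par ?_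
  · intro m
    by_cases h : ∃ φ ∈ p, Fml.code φ = m
    · exact (hp _ (hpos m h).1).1
    · rw [hneg m h]; trivial
  · intro m i hi
    by_cases h : ∃ φ ∈ p, Fml.code φ = m
    · exact Finset.mem_range.1 ((hp _ (hpos m h).1).2 hi)
    · rw [hneg m h] at hi; simp [Fml.freeN, PTerm.vars] at hi
  · obtain ⟨D, hD⟩ := hcomp
    have hc : Primrec₂ fun (b : Bool) (n : ℕ) =>
        cond b n (Fml.eq .zero .zero).code :=
      Primrec.cond Primrec.fst Primrec.snd (Primrec.const _)
    have := CompX.comp₂ C.hS hc (CompX.of_computable C.hS hD) (.of_primrec C.hS Primrec.id)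
    convert this using 2 with n
    by_cases h : ∃ φ ∈ p, Fml.code φ = n
    · simp only [h, decide_true, cond_true, id, (hpos n h).2]
    · simp only [h, decide_false, cond_false, hneg n h]
  · intro m
    obtain ⟨a, ha⟩ := hfin (((Finset.range m).image φ).filter (· ∈ p)) (by
      intro ψ hψ; simpa using (Finset.mem_filter.1 (Finset.mem_coe.1 hψ)).2)
    refine ⟨a, fun i hi => ?_⟩
    by_cases h : ∃ φ ∈ p, Fml.code φ = i
    · exact ha _ (Finset.mem_filter.2 ⟨Finset.mem_image_of_mem _ (Finset.mem_range.2 hi),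
        (hpos i h).1⟩)
    · rw [hneg i h]; simp
end Ctx

/-! ### Absoluteness of the coding formula for numerals -/

theorem univClosure_of_closed {φ : Fml} (h : φ.freeN = ∅) : univClosure φ = φ := by
  simp [univClosure, h]

theorem num_natStr (n : ℕ) : natStr.num n = n := by
  induction n with
  | zero => rfl
  | succ n ih => rw [AStr.num, ih]; rfl

namespace PAModel
variable {M : Type} {S : AStr M}

section
variable (h : ModelsT S PAax)
include h

theorem succ_ne (a : M) : S.add a S.one ≠ S.zero := by
  have := h (Fml.all 0 (.not (.eq (.add (.var 0) .one) .zero))) (.inl (by simp))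
    (fun _ => S.zero)
  simpa [PTerm.val] using (satFO_all.1 this) a

theorem succ_inj {a b : M} (hab : S.add a S.one = S.add b S.one) : a = b := by
  have := h (Fml.all 0 (.all 1 (.imp (.eq (.add (.var 0) .one) (.add (.var 1) .one))
     (.eq (.var 0) (.var 1))))) (.inl (by simp)) (fun _ => S.zero)
  simp only [satFO_all, satFO_imp, satFO_eq, PTerm.val] at this
  simpa [hab] using this a b

theorem add_zero (a : M) : S.add a S.zero = a := by
  have := h (Fml.all 0 (.eq (.add (.var 0) .zero) (.var 0))) (.inl (by simp)) (fun _ => S.zero)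
  simpa [PTerm.val] using (satFO_all.1 this) a

theorem add_succ (a b : M) : S.add a (S.add b S.one) = S.add (S.add a b) S.one := by
  have := h (Fml.all 0 (.all 1 (.eq (.add (.var 0) (.add (.var 1) .one))
     (.add (.add (.var 0) (.var 1)) .one)))) (.inl (by simp)) (fun _ => S.zero)
  simp only [satFO_all, satFO_eq, PTerm.val] at this
  simpa using this a b

theorem mul_zero (a : M) : S.mul a S.zero = S.zero := by
  have := h (Fml.all 0 (.eq (.mul (.var 0) .zero) .zero)) (.inl (by simp)) (fun _ => S.zero)
  simpa [PTerm.val] using (satFO_all.1 this) a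

theorem mul_succ (a b : M) : S.mul a (S.add b S.one) = S.add (S.mul a b) a := by
  have := h (Fml.all 0 (.all 1 (.eq (.mul (.var 0) (.add (.var 1) .one))
     (.add (.mul (.var 0) (.var 1)) (.var 0))))) (.inl (by simp)) (fun _ => S.zero)
  simp only [satFO_all, satFO_eq, PTerm.val] at this
  simpa using this a b

theorem lt_iff (a b : M) : S.lt a b ↔ ∃ c, S.add a (S.add c S.one) = b := by
  have := h (Fml.all 0 (.all 1 (Fml.iff (.lt (.var 0) (.var 1))
     (Fml.ex 2 (.eq (.add (.var 0) (.add (.var 2) .one)) (.var 1)))))) (.inl (by simp))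
     (fun _ => S.zero)
  simp only [satFO_all, satFO_iff, satFO_ex, satFO_lt, satFO_eq, PTerm.val] at this
  simpa using this a b

theorem zero_add (a : M) : S.add S.zero a = a := by
  have := h _ (.inr ⟨.eq (.add .zero (.var 0)) (.var 0), 0, trivial, rfl⟩) (fun _ => S.zero)
  rw [univClosure_of_closed (by decide)] at this
  simp only [indFml, Fml.substN, PTerm.subst, satFO_all, satFO_imp, satFO_and, satFO_eq,
    PTerm.val, Function.update_self, if_true] at this
  refine this ⟨add_zero h _, fun b hb => ?_⟩ a
  rw [add_succ h, hb]

theorem eq_zero_or_succ (a : M) : a = S.zero ∨ ∃ b, S.add b S.one = a := by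
  have := h _ (.inr ⟨.or (.eq (.var 0) .zero) (.ex 1 (.eq (.add (.var 1) .one) (.var 0))), 0,
    by simp [Fml.or, Fml.ex, Fml.IsFO], rfl⟩) (fun _ => S.zero)
  rw [univClosure_of_closed (by decide)] at this
  simp [indFml, Fml.or, Fml.ex, Fml.substN, PTerm.subst, satFO_all, satFO_imp, satFO_and, satFO_eq,
    PTerm.val] at this
  have := this a
  tauto

theorem num_one : S.num 1 = S.one := zero_add h _

theorem num_two : S.num 2 = S.two := by rw [AStr.num, num_one h]; rfl

theorem num_add (i j : ℕ) : S.add (S.num i) (S.num j) = S.num (i + j) := by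
  induction j with
  | zero => exact add_zero h _
  | succ j ih => rw [AStr.num, add_succ h, ih]; rfl

theorem num_mul (i j : ℕ) : S.mul (S.num i) (S.num j) = S.num (i * j) := by
  induction j with
  | zero => exact mul_zero h _
  | succ j ih => rw [AStr.num, mul_succ h, ih, num_add h]; rfl

theorem num_inj {i j : ℕ} (hij : S.num i = S.num j) : i = j := by
  induction i generalizing j with
  | zero =>
    cases j with
    | zero => rfl
    | succ j => exact (succ_ne h _ hij.symm).elim
  | succ i ih =>
    cases j with
    | zero => exact (succ_ne h _ hij).elim
    | succ j => rw [ih (succ_inj h hij)]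

/-- The numerals form an initial segment: summands of a numeral are numerals. -/
theorem add_eq_num {x z : M} {j : ℕ} (hj : S.add x z = S.num j) :
    ∃ i k, x = S.num i ∧ z = S.num k ∧ i + k = j := by
  induction j generalizing z with
  | zero =>
    rcases eq_zero_or_succ h z with rfl | ⟨w, rfl⟩
    · exact ⟨0, 0, by rw [← hj, add_zero h], rfl, rfl⟩
    · rw [add_succ h] at hj
      exact (succ_ne h _ hj).elim
  | succ j ih =>
    rcases eq_zero_or_succ h z with rfl | ⟨w, rfl⟩
    · exact ⟨j + 1, 0, by rw [← hj, add_zero h], rfl, rfl⟩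
    · rw [add_succ h] at hj
      obtain ⟨i, k, hi, rfl, rfl⟩ := ih (succ_inj h hj)
      exact ⟨i, k + 1, hi, rfl, rfl⟩

theorem lt_num {i j : ℕ} : S.lt (S.num i) (S.num j) ↔ i < j := by
  rw [lt_iff h]
  constructor
  · rintro ⟨c, hc⟩
    obtain ⟨i', k, h1, h2, h3⟩ := add_eq_num h hc
    cases k with
    | zero => exact (succ_ne h _ h2).elim
    | succ k => have := num_inj h h1; omega
  · intro hij
    refine ⟨S.num (j - i - 1), ?_⟩
    change S.add (S.num i) (S.num (j - i - 1 + 1)) = _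
    rw [num_add h]; congr 1; omega

theorem pairRel_num {p : ℕ} {a b : M} : S.PairRel (S.num p) a b ↔
    ∃ i j, a = S.num i ∧ b = S.num j ∧ natStr.PairRel p i j := by
  have key : ∀ i j, S.PairRel (S.num p) (S.num i) (S.num j) ↔ natStr.PairRel p i j := by
    intro i j
    rw [AStr.PairRel, AStr.PairRel, ← num_two h, ← num_one h]
    simp only [num_add h, num_mul h]
    exact ⟨fun e => num_inj h e, fun e => congrArg S.num e⟩
  constructor
  · intro hp
    have hp' := hp
    rw [AStr.PairRel, ← num_two h, num_mul h, mul_succ h] at hp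
    obtain ⟨_, _, h1, -, -⟩ := add_eq_num h hp.symm
    obtain ⟨_, _, -, h2, -⟩ := add_eq_num h h1
    obtain ⟨i, j, rfl, rfl, -⟩ := add_eq_num h h2
    exact ⟨i, j, rfl, rfl, (key i j).1 hp'⟩
  · rintro ⟨i, j, rfl, rfl, hp⟩
    exact (key i j).2 hp

/-- Membership between numerals is absolute. -/
theorem memRel_num {i c : ℕ} : S.MemRel (S.num i) (S.num c) ↔ natStr.MemRel i c := by
  have hM : ∀ b, S.add S.one (S.mul (S.add (S.num i) S.one) (S.num b)) =
      S.num (1 + (i + 1) * b) := by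
    intro b; rw [← num_one h]; simp only [num_add h, num_mul h]
  have hmod : ∀ a b : ℕ, (∃ q, S.num a = S.add (S.mul q (S.num (1 + (i + 1) * b))) S.one) ↔
      ∃ q, a = q * (1 + (i + 1) * b) + 1 := by
    intro a b
    rw [← num_one h]
    constructor
    · rintro ⟨q, hq⟩
      obtain ⟨_, _, h1, -, -⟩ := add_eq_num h hq.symm
      rw [Nat.add_comm 1, AStr.num, mul_succ h] at h1
      obtain ⟨_, k, -, rfl, -⟩ := add_eq_num h h1
      rw [num_mul h, num_add h] at hq
      exact ⟨k, num_inj h hq⟩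
    · rintro ⟨q, rfl⟩
      exact ⟨S.num q, by rw [num_mul h, num_add h]⟩
  have hlt : ∀ b, S.lt S.one (S.num b) ↔ 1 < b := by
    intro b; rw [← num_one h, lt_num h]
  simp only [AStr.MemRel, AStr.ModRel, lt_num h, pairRel_num h]
  refine and_congr Iff.rfl ⟨?_, ?_⟩
  · rintro ⟨_, _, ⟨a, b, rfl, rfl, hp⟩, h1, -, h2⟩
    rw [hM] at h1 h2
    exact ⟨a, b, hp, (hlt _).1 h1, (hlt _).1 h1, (hmod a b).1 h2⟩
  · rintro ⟨a, b, hp, h1, -, h2⟩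
    refine ⟨_, _, ⟨a, b, rfl, rfl, hp⟩, ?_⟩
    rw [hM]
    exact ⟨(hlt _).2 h1, (hlt _).2 h1, (hmod a b).2 h2⟩

end
end PAModel

/-- Every finite initial segment of a set is coded by a natural number. -/
theorem exists_natCode (A : Set ℕ) (m : ℕ) : ∃ c, ∀ i < m, natStr.MemRel i c ↔ i ∈ A := by
  classical
  -- the last entry `m` of the sequence bounds the code from below
  let l : List ℕ := (List.range m).map (fun i => if i ∈ A then 1 else 0) ++ [m]
  have hl : l.length = m + 1 := by simp [l]
  have hb : ∀ i (hi : i < m + 1), (Nat.unbeta l).unpair.1 %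
      ((i + 1) * (Nat.unbeta l).unpair.2 + 1) = l[i] := fun i hi =>
    Nat.beta_unbeta_coe l ⟨i, by omega⟩
  generalize (Nat.unbeta l).unpair.1 = a at hb
  generalize (Nat.unbeta l).unpair.2 = b at hb
  have ham : m ≤ a := by
    have := hb m (by omega)
    simp only [l, List.getElem_append, List.length_map, List.length_range, lt_irrefl] at this
    simp at this
    rw [← this]; exact Nat.mod_le _ _
  refine ⟨cpair a b, fun i hi => ?_⟩
  have hi' := hb i (by omega)
  simp only [l, List.getElem_append, List.length_map, List.length_range, hi] at hi'
  simp at hi'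
  have hiff : natStr.MemRel i (cpair a b) ↔ i < cpair a b ∧ 1 < 1 + (i + 1) * b ∧
      ∃ q, a = q * (1 + (i + 1) * b) + 1 := by
    simp only [AStr.MemRel, natStr_pairRel, AStr.ModRel]
    constructor
    · rintro ⟨h1, a', b', h2, h3, -, h4⟩
      obtain ⟨rfl, rfl⟩ := cpair_inj h2
      exact ⟨h1, h3, h4⟩
    · rintro ⟨h1, h3, h4⟩
      exact ⟨h1, a, b, rfl, h3, h3, h4⟩
  rw [hiff, Nat.add_comm 1]
  constructor
  · rintro ⟨-, h1, q, hq⟩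
    by_contra hA
    rw [if_neg hA, hq, Nat.mul_add_mod_self_right, Nat.mod_eq_of_lt h1] at hi'
    exact one_ne_zero hi'
  · intro hA
    rw [if_pos hA] at hi'
    refine ⟨(hi.trans_le ham).trans_le (le_cpair_left a b), ?_, ?_⟩
    · by_contra h1
      have : (i + 1) * b + 1 = 1 := by omega
      rw [this, Nat.mod_one] at hi'
      exact zero_ne_one hi'
    · refine ⟨a / ((i + 1) * b + 1), ?_⟩
      have := Nat.div_add_mod a ((i + 1) * b + 1)
      rw [hi', Nat.mul_comm] at this
      exact this.symm

/-! ### The standard system of the definable ultrapower -/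

/-- The formula `x₁ ∈ x₀`. -/
def memF : Fml :=
  let M : PTerm := .add .one (.mul (.add (.var 1) .one) (.var 3))
  let two : PTerm := .add .one .one
  let s : PTerm := .add (.var 2) (.var 3)
  (Fml.lt (.var 1) (.var 0)).and <| Fml.ex 2 <| Fml.ex 3 <|
    (Fml.eq (.mul two (.var 0)) (.add (.mul s (.add s .one)) (.mul two (.var 2)))).and <|
    (Fml.lt .one M).and <| (Fml.lt .one M).and <|
    Fml.ex 4 (.eq (.var 2) (.add (.mul (.var 4) M) .one))

theorem memF_isFO : memF.IsFO := by simp [memF, Fml.and, Fml.ex, Fml.IsFO]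

theorem memF_free : memF.freeN = {0, 1} := by decide

theorem satFO_memF {M : Type} {S : AStr M} {v : ℕ → M} :
    SatFO S v memF ↔ S.MemRel (v 1) (v 0) := by
  simp only [memF, satFO_and, satFO_ex, satFO_lt, satFO_eq, PTerm.val]
  simp only [Function.update_self, ne_eq, OfNat.zero_ne_ofNat,
    OfNat.one_ne_ofNat, Nat.reduceEqDiff, not_false_eq_true, Function.update_of_ne]
  rfl

theorem val_numeral {M : Type} {S : AStr M} {v : ℕ → M} (n : ℕ) :
    (numeral n).val S v = S.num n := by
  induction n with
  | zero => rfl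
  | succ n ih => rw [numeral, PTerm.val, ih]; rfl

theorem vars_numeral (n : ℕ) : (numeral n).vars = ∅ := by
  induction n with
  | zero => rfl
  | succ n ih => rw [numeral, PTerm.vars, ih]; rfl

theorem primrec_numeral : Primrec fun n => (numeral n).code := by
  have hp : Primrec₂ fun (_ : ℕ) (c : ℕ) => cpair 3 (cpair c (cpair 2 0)) :=
    Primrec.cpair (Primrec.const 3) (Primrec.cpair Primrec.snd (Primrec.const _))
  refine (Primrec.nat_rec₁ (cpair 1 0) hp).of_eq fun n => ?_
  induction n with
  | zero => rfl
  | succ n ih => exact congrArg (fun c => cpair 3 (cpair c (cpair 2 0))) ih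

theorem primrec_num_henk (X : Set ℕ) : Primrec (henk X).num := by
  have hp : Primrec₂ fun (_ : ℕ) (c : ℕ) => dadd c dunit :=
    Primrec.dadd Primrec.snd (Primrec.const _)
  refine (Primrec.nat_rec₁ dzero hp).of_eq fun n => ?_
  induction n with
  | zero => rfl
  | succ n ih => exact congrArg (dadd · dunit) ih

/-- The formula `μ(n, x₀)` or its negation, according to `b`, where the first argument of `μ` is the
variable `x₁`. -/
def decF (μ : Fml) (b : Bool) (n : ℕ) : Fml :=
  .all 1 (.imp (.eq (.var 1) (numeral n)) (cond b μ μ.not))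

theorem compX_decF {𝔛 : Set (Set ℕ)} (hS : IsScottSet 𝔛) (μ : Fml) {b : ℕ → Bool}
    (hb : CompX 𝔛 b) : CompX 𝔛 fun n => (decF μ (b n) n).code := by
  have hp : Primrec₂ fun (b : Bool) (n : ℕ) => cpair 9 (cpair 1 (cpair 8 (cpair
      (cpair 5 (cpair (cpair 0 1) (numeral n).code)) (cond b μ.code μ.not.code)))) :=
    Primrec.cpair (Primrec.const 9) <| Primrec.cpair (Primrec.const 1) <|
      Primrec.cpair (Primrec.const 8) <| Primrec.cpair
        (Primrec.cpair (Primrec.const 5) <| Primrec.cpair (Primrec.const _)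
          (primrec_numeral.comp Primrec.snd))
        (Primrec.cond Primrec.fst (Primrec.const _) (Primrec.const _))
  have := CompX.comp₂ hS hp hb (.of_primrec hS Primrec.id)
  convert this using 2 with n
  cases b n <;> rfl

theorem decF_isFO (b : Bool) (n : ℕ) : (decF memF b n).IsFO := by
  cases b <;> exact ⟨trivial, memF_isFO⟩

theorem decF_free (b : Bool) (n : ℕ) : ∀ i ∈ (decF memF b n).freeN, i < 0 + 1 := by
  cases b <;> simp [decF, Fml.freeN, PTerm.vars, vars_numeral, memF_free] <;> tauto

theorem satFO_decF {M : Type} {S : AStr M} {v : ℕ → M} (b : Bool) (n : ℕ) :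
    SatFO S v (decF memF b n) ↔ (S.MemRel (S.num n) (v 0) ↔ b = true) := by
  cases b <;>
    simp [decF, satFO_all, satFO_imp, satFO_eq, PTerm.val, val_numeral, satFO_not, satFO_memF]

namespace Ctx
variable {C : Ctx}

theorem str_num (n : ℕ) : C.str.num n = cls (cst ((henk C.X).num n)) := by
  induction n with
  | zero => rfl
  | succ n ih => rw [AStr.num, ih]; rfl

/-- The set coded by an element is in `𝔛`, by Łoś's theorem and definability of the ultrafilter. -/
theorem coded_mem (c : C.N) : {n | C.str.MemRel (C.str.num n) c} ∈ C.𝔛 := by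
  obtain ⟨f, rfl⟩ := exists_cls c
  let g : C.Sq := ⟨fun p => (henk C.X).num p.unpair.1, CompX.of_primrec C.hS
    ((primrec_num_henk C.X).comp (Primrec.fst.comp Primrec.unpair))⟩
  let f' : C.Sq := ⟨fun p => f.1 p.unpair.2, CompX.comp C.hS f.2
    (.of_primrec C.hS (Primrec.snd.comp Primrec.unpair))⟩
  have := C.uf.dfn _ (satSet_mem memF memF_isFO fun i => if i = 1 then g else f')
  convert this using 3 with n
  rw [str_num]
  have := los (C := C) memF memF_isFO
    (fun i => if i = 1 then cst ((henk C.X).num n) else f)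
  rw [satFO_memF] at this
  simp only [if_true, zero_ne_one, if_false] at this
  rw [this]
  refine iff_of_eq (congrArg (· ∈ C.U) (Set.ext fun k => ?_))
  rw [Set.mem_ofPred_eq, Set.mem_ofPred_eq, Set.mem_ofPred_eq]
  refine iff_of_eq (congrArg _ (funext fun i => ?_))
  by_cases hi : i = 1 <;> simp [hi, g, f', cst]

/-- Every member of `𝔛` is coded, by saturation: its initial segments are coded by numerals. -/
theorem exists_code (hM : ModelsT C.str PAax) {A : Set ℕ} (hA : A ∈ C.𝔛) :
    ∃ c : C.N, ∀ n, n ∈ A ↔ C.str.MemRel (C.str.num n) c := by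
  classical
  obtain ⟨c, hc⟩ := realize (C := C) (φ := fun n => decF memF (decide (n ∈ A)) n) (k := 0)
    (fun n => decF_isFO _ n) (fun n => decF_free _ n) (compX_decF C.hS memF (CompX.of_mem hA))
    (fun _ => C.str.zero) (by
      intro m
      obtain ⟨c, hc⟩ := exists_natCode A m
      refine ⟨C.str.num c, fun i hi => ?_⟩
      rw [satFO_decF, Function.update_self, PAModel.memRel_num hM, hc i hi]
      simp)
  refine ⟨c, fun n => ?_⟩
  have := hc n
  rw [satFO_decF, Function.update_self] at this
  rw [this]; simp

theorem ssy (hM : ModelsT C.str PAax) : C.str.SSy = C.𝔛 := by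
  ext A
  constructor
  · rintro ⟨c, hc⟩
    rw [Set.ext hc (b := {n | C.str.MemRel (C.str.num n) c})]
    exact coded_mem c
  · exact exists_code hM

end Ctx

/-- Theorem 1 of the paper. A Scott set `𝔛` carrying a definable
nonprincipal ultrafilter on `P_𝔛` which contains (the code set of) a consistent
completion `T` of `PA` is the standard system of a recursively saturated model of `T`. -/
theorem scott_set_with_definable_ultrafilter
    (𝔛 U : Set (Set ℕ)) (T : Set Fml)
    (hScott : IsScottSet 𝔛)
    (hUltra : IsUltraOn {A | A ∈ 𝔛 ∧ A.Infinite} U)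
    (hNonPrin : ¬ IsPrincipalOn {A | A ∈ 𝔛 ∧ A.Infinite} U)
    (hDef : natStr.DefinableFam 𝔛 U)
    (hSent : ∀ φ ∈ T, IsFOSentence φ)
    (hPA : PAax ⊆ T) (hCons : ConsistentT T) (hComp : CompleteT T)
    (hTin : theoryCode T ∈ 𝔛) :
    ∃ (N : Type) (SN : AStr N), ModelsT SN T ∧ SN.RecSat ∧ SN.SSy = 𝔛 := by
  have hFO : ∀ φ ∈ T, φ.IsFO := fun φ hφ => (hSent φ hφ).1
  obtain ⟨X, hX, tc⟩ := exists_tc hScott hFO hCons hTin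
  let C : Ctx := ⟨𝔛, U, theoryCode T, X, hScott, UF.of_ultra hScott hUltra hDef, hX, tc⟩
  have hM : ModelsT C.str T := Ctx.modelsT hFO rfl
  exact ⟨C.N, C.str, hM, Ctx.recSat, Ctx.ssy fun φ hφ => hM φ (hPA hφ)⟩

end Paper
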